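/- Let C be a real-rational n×n transfer matrix in RH∞. Then the following are equivalent: (i) the positive feedback interconnection [P,C] is stable for every strictly proper negative imaginary (NI) P ∈ R^{n×n}; (ii) [P,C] is stable for every strictly proper NI P ∈ R^{n×n} that has no double pole at the origin; (iii) C is strictly negative imaginary (SNI) and C(0) < 0 (negative definite). -/

import Mathlib

open Matrix Polynomial Filter Topology
open scoped ComplexOrder

noncomputable section

namespace NIControl

/-- Evaluate a real-rational function at a complex point (junk value at poles). -/
def evalC (f : RatFunc ℝ) (s : ℂ) : ℂ :=
  f.eval (algebraMap ℝ ℂ) s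

/-- `s` is a pole of the real-rational function `f`
(the reduced denominator vanishes at `s`). -/
def IsPoleAt (f : RatFunc ℝ) (s : ℂ) : Prop :=
  f.denom.eval₂ (algebraMap ℝ ℂ) s = 0

variable {n : ℕ}

/-- Pointwise evaluation of a real-rational transfer matrix at a complex point. -/
def evalM (G : Matrix (Fin n) (Fin n) (RatFunc ℝ)) (s : ℂ) : Matrix (Fin n) (Fin n) ℂ :=
  Matrix.of fun i j => evalC (G i j) s

/-- Pointwise evaluation of a real-rational transfer matrix at a real point. -/
def evalR (G : Matrix (Fin n) (Fin n) (RatFunc ℝ)) (x : ℝ) : Matrix (Fin n) (Fin n) ℝ :=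
  Matrix.of fun i j => (G i j).eval (RingHom.id ℝ) x

/-- Value at `s = ∞` of a proper real-rational function. -/
def atInfinity (f : RatFunc ℝ) : ℝ :=
  if f.num.degree = f.denom.degree then f.num.leadingCoeff / f.denom.leadingCoeff else 0

/-- The instantaneous gain `G(∞)` of a proper real-rational transfer matrix. -/
def evalInf (G : Matrix (Fin n) (Fin n) (RatFunc ℝ)) : Matrix (Fin n) (Fin n) ℝ :=
  Matrix.of fun i j => atInfinity (G i j)

/-- The matrix `G` has a pole at `s`. -/
def HasPole (G : Matrix (Fin n) (Fin n) (RatFunc ℝ)) (s : ℂ) : Prop :=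
  ∃ i j, IsPoleAt (G i j) s

/-- All entries of `G` are proper rational functions. -/
def Proper (G : Matrix (Fin n) (Fin n) (RatFunc ℝ)) : Prop :=
  ∀ i j, (G i j).num.degree ≤ (G i j).denom.degree

/-- All entries of `G` are strictly proper rational functions. -/
def StrictlyProper (G : Matrix (Fin n) (Fin n) (RatFunc ℝ)) : Prop :=
  ∀ i j, (G i j).num.degree < (G i j).denom.degree

/-- The pole of `G` at the origin (if any) is at most simple. -/
def NoDoubleOriginPole (G : Matrix (Fin n) (Fin n) (RatFunc ℝ)) : Prop :=
  ∀ i j, (G i j).denom.rootMultiplicity 0 ≤ 1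

/-- Membership in `RH∞`: proper and no poles in the closed right-half complex plane. -/
def MemRHinf {m : Type*} [Fintype m] (G : Matrix m m (RatFunc ℝ)) : Prop :=
  (∀ i j, (G i j).num.degree ≤ (G i j).denom.degree) ∧
  ∀ s : ℂ, 0 ≤ s.re → ∀ i j, ¬ IsPoleAt (G i j) s

/-- The point `jω` on the imaginary axis. -/
def jw (ω : ℝ) : ℂ := Complex.I * (ω : ℂ)

/-- The negative-imaginary frequency kernel `j (M − M*)`. -/
def niKer (M : Matrix (Fin n) (Fin n) ℂ) : Matrix (Fin n) (Fin n) ℂ :=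
  Complex.I • (M - Mᴴ)

/-- Negative imaginary (NI) real-rational transfer matrix. -/
def IsNI (G : Matrix (Fin n) (Fin n) (RatFunc ℝ)) : Prop :=
  Proper G ∧
  (∀ s : ℂ, 0 < s.re → ¬ HasPole G s) ∧
  (∀ ω : ℝ, 0 < ω → ¬ HasPole G (jw ω) → (niKer (evalM G (jw ω))).PosSemidef) ∧
  (∀ ω : ℝ, 0 < ω → HasPole G (jw ω) →
    ∃ R : Matrix (Fin n) (Fin n) ℂ, R.PosSemidef ∧
      Tendsto (fun s : ℂ => (s - jw ω) • Complex.I • evalM G s) (𝓝[≠] jw ω) (𝓝 R)) ∧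
  (HasPole G 0 →
    (∀ k : ℕ, 3 ≤ k → Tendsto (fun s : ℂ => s ^ k • evalM G s) (𝓝[≠] 0) (𝓝 0)) ∧
    ∃ R : Matrix (Fin n) (Fin n) ℂ, R.PosSemidef ∧
      Tendsto (fun s : ℂ => s ^ 2 • evalM G s) (𝓝[≠] 0) (𝓝 R))

/-- Strictly negative imaginary (SNI) real-rational transfer matrix. -/
def IsSNI (G : Matrix (Fin n) (Fin n) (RatFunc ℝ)) : Prop :=
  MemRHinf G ∧ ∀ ω : ℝ, 0 < ω → (niKer (evalM G (jw ω))).PosDef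

/-- Positive real (passive) real-rational transfer matrix. -/
def IsPositiveReal (G : Matrix (Fin n) (Fin n) (RatFunc ℝ)) : Prop :=
  MemRHinf G ∧ ∀ ω : ℝ, 0 ≤ ω → (evalM G (jw ω) + (evalM G (jw ω))ᴴ).PosSemidef

/-- Output strictly passive real-rational transfer matrix. -/
def IsOSP (G : Matrix (Fin n) (Fin n) (RatFunc ℝ)) : Prop :=
  MemRHinf G ∧ ∃ ε : ℝ, 0 < ε ∧ ∀ ω : ℝ, 0 ≤ ω →
    (evalM G (jw ω) + (evalM G (jw ω))ᴴ -
      (ε : ℂ) • ((evalM G (jw ω))ᴴ * evalM G (jw ω))).PosSemidef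

/-- Stability of the positive feedback interconnection `[P, C]`:
`[I; C] (I − P C)⁻¹ [I, P] ∈ RH∞`. -/
def FeedbackStable (P C : Matrix (Fin n) (Fin n) (RatFunc ℝ)) : Prop :=
  ((1 : Matrix (Fin n) (Fin n) (RatFunc ℝ)) - P * C).det ≠ 0 ∧
  MemRHinf (Matrix.fromBlocks
    (1 - P * C)⁻¹ ((1 - P * C)⁻¹ * P)
    (C * (1 - P * C)⁻¹) (C * (1 - P * C)⁻¹ * P))

/-- All eigenvalues of the complex matrix `M` are real and less than `c`. -/
def eigsRealAndLT (M : Matrix (Fin n) (Fin n) ℂ) (c : ℝ) : Prop :=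
  ∀ μ ∈ spectrum ℂ M, μ.im = 0 ∧ μ.re < c

/-- The (real) eigenvalues of the real matrix `M` are all real and its largest
eigenvalue is less than `c`. -/
def maxEigLT (M : Matrix (Fin n) (Fin n) ℝ) (c : ℝ) : Prop :=
  eigsRealAndLT (M.map (Complex.ofReal)) c

/-- Loewner order `A ≤ B` on real matrices. -/
def LoewnerLE (A B : Matrix (Fin n) (Fin n) ℝ) : Prop := (B - A).PosSemidef

/-- Strict Loewner order `A < B` on real matrices. -/
def LoewnerLT (A B : Matrix (Fin n) (Fin n) ℝ) : Prop := (B - A).PosDef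

section Part1

lemma dense_of_cofinite {g : ℝ → ℝ} (hg : Continuous g) (h : ∀ᶠ ω : ℝ in cofinite, 0 ≤ g ω) :
    ∀ ω, 0 ≤ g ω := by
  intro ω
  have hcl : IsClosed {x | 0 ≤ g x} := isClosed_le continuous_const hg
  have hd : Dense {x | 0 ≤ g x} := by
    have : ({x | 0 ≤ g x}ᶜ : Set ℝ).Finite := h
    simpa using (Set.Finite.countable this).dense_compl ℝ
  have := hd.closure_eq
  rw [hcl.closure_eq] at this
  have h2 : ω ∈ {x | 0 ≤ g x} := by rw [this]; trivial
  exact h2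

lemma pr_base (p q : ℂ[X]) (hdeg : p.degree ≤ q.degree) (hq : ∀ s : ℂ, 0 ≤ s.re → q.eval s ≠ 0)
    (hre : ∀ᶠ ω : ℝ in cofinite, 0 ≤ (p.eval (Complex.I * ω) / q.eval (Complex.I * ω)).re)
    (s : ℂ) (hs : 0 < s.re) : 0 ≤ (p.eval s / q.eval s).re := by
  have him : ∀ ω : ℝ, 0 ≤ (p.eval (Complex.I * ω) / q.eval (Complex.I * ω)).re := by
    apply dense_of_cofinite _ hre
    apply Complex.continuous_re.comp
    apply Continuous.div₀
    · exact p.continuous.comp (by fun_prop)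
    · exact q.continuous.comp (by fun_prop)
    · intro ω; apply hq; simp
  -- bounded at infinity
  obtain ⟨K, hK⟩ := (isBigO_cobounded_of_degree_le hdeg).bound
  have hb : ∀ z : ℂ, ‖p.eval z‖ ≤ K * ‖q.eval z‖ → q.eval z ≠ 0 →
      ‖Complex.exp (-(p.eval z / q.eval z))‖ ≤ Real.exp K := by
    intro z hz h0
    rw [Complex.norm_exp]
    apply Real.exp_le_exp.mpr
    have : ‖p.eval z / q.eval z‖ ≤ K := by
      rw [norm_div, div_le_iff₀ (norm_pos_iff.mpr h0)]; exact hz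
    have h3 := Complex.abs_re_le_norm (p.eval z / q.eval z)
    rw [Complex.neg_re]
    exact (neg_le_abs _).trans (h3.trans this)
  have key := PhragmenLindelof.right_half_plane_of_bounded_on_real
    (f := fun z => Complex.exp (-(p.eval z / q.eval z))) (C := 1) (z := s) ?_ ?_ ?_ ?_ hs.le
  · rw [Complex.norm_exp] at key
    rw [Real.exp_le_one_iff, Complex.neg_re] at key
    linarith
  · have hcl : closure {z : ℂ | 0 < z.re} ⊆ {z | 0 ≤ z.re} :=
      closure_minimal (fun z (hz : 0 < z.re) => (le_of_lt hz : 0 ≤ z.re)) (isClosed_le continuous_const Complex.continuous_re)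
    constructor
    · intro z hz
      apply DifferentiableAt.differentiableWithinAt
      apply DifferentiableAt.cexp
      apply DifferentiableAt.neg
      exact p.differentiableAt.div q.differentiableAt (hq z (le_of_lt hz))
    · intro z hz
      apply ContinuousAt.continuousWithinAt
      apply ContinuousAt.cexp
      apply ContinuousAt.neg
      exact p.continuousAt.div q.continuousAt (hq z (hcl hz))
  · refine ⟨0, by norm_num, 0, ?_⟩
    refine Asymptotics.IsBigO.of_bound (Real.exp K) ?_
    rw [eventually_inf_principal]
    filter_upwards [hK] with z hz hz'
    simpa using hb z hz (hq z (le_of_lt hz'))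
  · have ht : Tendsto (fun x : ℝ => (x : ℂ)) atTop (Bornology.cobounded ℂ) := by
      rw [← tendsto_norm_atTop_iff_cobounded]
      simpa using tendsto_abs_atTop_atTop
    refine ⟨Real.exp K, ?_⟩
    rw [eventually_map]
    filter_upwards [ht.eventually hK, eventually_ge_atTop 0] with x hx hx0
    exact hb _ hx (hq _ (by simpa using hx0))
  · intro x
    rw [Complex.norm_exp, Real.exp_le_one_iff, Complex.neg_re]
    have := him x
    rw [mul_comm] at this
    linarith

lemma evne {q : ℂ[X]} (hq : q ≠ 0) (a : ℂ) : ∀ᶠ s in 𝓝[≠] a, q.eval s ≠ 0 := by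
  have h1 := eventually_cofinite_not_isRoot hq
  exact nhdsNE_le_cofinite a h1

lemma pr_ind (d : ℕ) : ∀ (p q : ℂ[X]), q.natDegree = d → q ≠ 0 → p.degree ≤ q.degree →
    (∀ s : ℂ, 0 < s.re → q.eval s ≠ 0) →
    (∀ᶠ ω : ℝ in cofinite, 0 ≤ (p.eval (Complex.I * ω) / q.eval (Complex.I * ω)).re) →
    (∀ ω : ℝ, q.eval (Complex.I * ω) = 0 → ∃ r : ℝ, 0 ≤ r ∧
      Tendsto (fun s : ℂ => (s - Complex.I * ω) * (p.eval s / q.eval s)) (𝓝[≠] (Complex.I * ω))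
        (𝓝 (r : ℂ))) →
    ∀ s : ℂ, 0 < s.re → 0 ≤ (p.eval s / q.eval s).re := by
  induction d with
  | zero =>
    intro p q hd hq0 hdeg _ hre _ s hs
    refine pr_base p q hdeg ?_ hre s hs
    intro s _ h
    rw [Polynomial.eq_C_of_natDegree_eq_zero hd] at h hq0
    simp at h hq0
    exact hq0 h
  | succ d ih =>
    intro p q hd hq0 hdeg hq hre hres s hs
    by_cases hex : ∃ ω : ℝ, q.eval (Complex.I * ω) = 0
    · obtain ⟨ω, hω⟩ := hex
      obtain ⟨r, hr, hlim⟩ := hres ω hω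
      obtain ⟨q1, rfl⟩ := dvd_iff_isRoot.mpr hω
      set a : ℂ := Complex.I * ω with ha
      have hX : (X - C a : ℂ[X]) ≠ 0 := X_sub_C_ne_zero a
      have hq1 : q1 ≠ 0 := right_ne_zero_of_mul hq0
      have hroot : (p - C (r : ℂ) * q1).IsRoot a := by
        have h1 : Tendsto (fun s => ((s - a) * (p.eval s / ((X - C a) * q1).eval s) - r) * q1.eval s)
            (𝓝[≠] a) (𝓝 (((r : ℂ) - r) * q1.eval a)) :=
          (hlim.sub_const _).mul (q1.continuous.continuousAt.tendsto.mono_left nhdsWithin_le_nhds)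
        have h2 : Tendsto (fun s => (p - C (r : ℂ) * q1).eval s) (𝓝[≠] a)
            (𝓝 ((p - C (r : ℂ) * q1).eval a)) :=
          ((p - C (r : ℂ) * q1).continuous.continuousAt.tendsto.mono_left nhdsWithin_le_nhds)
        have h3 := h1.congr' (f₂ := fun s => (p - C (r : ℂ) * q1).eval s) (by
          filter_upwards [evne hq1 a, self_mem_nhdsWithin] with s h5 h6
          have h7 : s - a ≠ 0 := sub_ne_zero.mpr h6
          simp only [eval_mul, eval_sub, eval_X, eval_C]
          field_simp)
        have := tendsto_nhds_unique h2 h3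
        rw [IsRoot, this]; simp
      obtain ⟨p1, hp1⟩ := dvd_iff_isRoot.mpr hroot
      have hp : p = (X - C a) * p1 + C (r : ℂ) * q1 := by rw [← hp1]; ring
      have hval : ∀ z, z ≠ a → q1.eval z ≠ 0 →
          p.eval z / ((X - C a) * q1).eval z = p1.eval z / q1.eval z + r / (z - a) := by
        intro z hz hz1
        have h7 : z - a ≠ 0 := sub_ne_zero.mpr hz
        rw [hp]
        simp only [eval_mul, eval_sub, eval_X, eval_C, eval_add]
        field_simp
      have hdq : ((X - C a) * q1).natDegree = q1.natDegree + 1 := by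
        rw [natDegree_mul hX hq1, natDegree_X_sub_C, add_comm]
      have hmain := ih p1 q1 (by omega) hq1 ?_ ?_ ?_ ?_ s hs
      · rw [hval s ?_ ?_, Complex.add_re]
        · have : 0 ≤ ((r : ℂ) / (s - a)).re := by
            rw [Complex.div_re]
            have h1 : (s - a).re = s.re := by simp [ha]
            rw [h1]; simp only [Complex.ofReal_re, Complex.ofReal_im, zero_mul, zero_div, add_zero]
            exact div_nonneg (mul_nonneg hr hs.le) (Complex.normSq_nonneg _)
          linarith
        · rintro rfl; simp [ha] at hs
        · intro h; apply hq s hs; simp [h]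
      · by_cases h0 : p1 = 0
        · simp [h0]
        have h1 : ((X - C a) * p1).degree ≤ ((X - C a) * q1).degree := by
          rw [← hp1]
          refine (degree_sub_le _ _).trans (max_le hdeg ?_)
          rw [degree_mul, degree_mul, degree_X_sub_C]
          gcongr
          exact degree_C_le.trans (by norm_num)
        rw [degree_mul, degree_mul, degree_X_sub_C, degree_eq_natDegree h0, degree_eq_natDegree hq1] at h1
        rw [degree_eq_natDegree h0, degree_eq_natDegree hq1]
        norm_cast at h1 ⊢
        omega
      · intro z hz h; apply hq z hz; simp [h]
      · have hfin : ∀ᶠ x : ℝ in cofinite, q1.eval (Complex.I * x) ≠ 0 := by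
          have h1 := eventually_cofinite_not_isRoot hq1
          have hinj : Function.Injective (fun x : ℝ => Complex.I * (x : ℂ)) := by
            intro x y h; simpa using h
          exact hinj.tendsto_cofinite.eventually h1
        filter_upwards [hre, hfin, (Set.finite_singleton ω).eventually_cofinite_notMem] with x h1 h2 h3
        rw [hval _ ?_ h2, Complex.add_re] at h1
        · have : ((r : ℂ) / (Complex.I * x - a)).re = 0 := by
            rw [Complex.div_re]; simp [ha]
          linarith
        · simp only [Set.mem_singleton_iff] at h3
          simpa [ha] using h3
      · intro ω' hω'
        obtain ⟨r', hr', hl'⟩ := hres ω' (by simp [hω'])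
        have hev : ∀ᶠ z in 𝓝[≠] (Complex.I * (ω' : ℂ)), (z - Complex.I * ω') * (p.eval z / ((X - C a) * q1).eval z)
            - (z - Complex.I * ω') * (r / (z - a)) = (z - Complex.I * ω') * (p1.eval z / q1.eval z) := by
          filter_upwards [evne hq1 _, evne hX _] with z h1 h2
          have h4 : z ≠ a := by
            simp only [eval_sub, eval_X, eval_C] at h2
            exact sub_ne_zero.mp h2
          rw [hval z h4 h1]; ring
        by_cases hw : ω' = ω
        · subst hw
          refine ⟨0, le_rfl, ?_⟩
          refine Tendsto.congr' hev ?_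
          have h5 : Tendsto (fun z => (z - Complex.I * (ω' : ℂ)) * ((r : ℂ) / (z - a)))
              (𝓝[≠] (Complex.I * (ω' : ℂ))) (𝓝 (r : ℂ)) := by
            refine Tendsto.congr' ?_ tendsto_const_nhds
            filter_upwards [self_mem_nhdsWithin] with z hz
            have : z - a ≠ 0 := sub_ne_zero.mpr hz
            rw [← ha]; field_simp
          simpa using hlim.sub h5
        · refine ⟨r', hr', ?_⟩
          refine Tendsto.congr' hev ?_
          have hne : Complex.I * (ω' : ℂ) - a ≠ 0 := by
            rw [ha, ← mul_sub]; simp [sub_eq_zero, hw]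
          have h5 : Tendsto (fun z => (z - Complex.I * (ω' : ℂ)) * ((r : ℂ) / (z - a)))
              (𝓝[≠] (Complex.I * (ω' : ℂ))) (𝓝 ((Complex.I * (ω' : ℂ) - Complex.I * ω') * (r / (Complex.I * ω' - a)))) := by
            refine Tendsto.mono_left ?_ nhdsWithin_le_nhds
            apply ContinuousAt.tendsto (f := fun z => (z - Complex.I * (ω' : ℂ)) * ((r : ℂ) / (z - a)))
            fun_prop (disch := exact hne)
          simpa using hl'.sub h5
    · push Not at hex
      refine pr_base p q hdeg ?_ hre s hs
      intro z hz
      rcases hz.lt_or_eq with h | h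
      · exact hq z h
      · have : z = Complex.I * (z.im : ℂ) := by
          apply Complex.ext <;> simp [← h]
        rw [this]; exact hex _

end Part1

section Part2

/-- complex polynomial attached to a real one -/
abbrev toC (p : ℝ[X]) : ℂ[X] := p.map (algebraMap ℝ ℂ)

lemma not_pole_iff (f : RatFunc ℝ) (s : ℂ) : ¬ IsPoleAt f s ↔ (toC f.denom).eval s ≠ 0 := by
  rw [IsPoleAt, eval_map]

lemma not_pole_of_dvd {f : RatFunc ℝ} {q : ℝ[X]} {s : ℂ} (h : f.denom ∣ q)
    (hq : q.eval₂ (algebraMap ℝ ℂ) s ≠ 0) : ¬ IsPoleAt f s := by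
  obtain ⟨r, rfl⟩ := h
  intro hp
  apply hq
  rw [IsPoleAt] at hp
  rw [eval₂_mul, hp, zero_mul]

/-- rational functions without a pole at `s` -/
def reg (s : ℂ) : Subring (RatFunc ℝ) where
  carrier := {f | ¬ IsPoleAt f s}
  mul_mem' := by
    intro a b ha hb
    refine not_pole_of_dvd (RatFunc.denom_mul_dvd a b) ?_
    rw [eval₂_mul]; exact mul_ne_zero ha hb
  one_mem' := by simp [IsPoleAt]
  add_mem' := by
    intro a b ha hb
    refine not_pole_of_dvd (RatFunc.denom_add_dvd a b) ?_
    rw [eval₂_mul]; exact mul_ne_zero ha hb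
  zero_mem' := by simp [IsPoleAt]
  neg_mem' := by
    intro a ha
    have h : -a = algebraMap ℝ[X] (RatFunc ℝ) (-1) * a := by simp
    rw [h]
    refine not_pole_of_dvd (RatFunc.denom_mul_dvd _ a) ?_
    rw [eval₂_mul, RatFunc.denom_algebraMap, eval₂_one, one_mul]; exact ha

lemma mem_reg {s : ℂ} {f : RatFunc ℝ} : f ∈ reg s ↔ ¬ IsPoleAt f s := Iff.rfl

/-- evaluation as ring hom -/
def ev (s : ℂ) : reg s →+* ℂ where
  toFun f := evalC f.1 s
  map_one' := RatFunc.eval_one _ _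
  map_mul' a b := RatFunc.eval_mul _ _ a.2 b.2
  map_zero' := RatFunc.eval_zero _ _
  map_add' a b := RatFunc.eval_add _ _ a.2 b.2

@[simp] lemma ev_apply (s : ℂ) (f : reg s) : ev s f = evalC f.1 s := rfl

lemma evalC_eq (f : RatFunc ℝ) (s : ℂ) : evalC f s = (toC f.num).eval s / (toC f.denom).eval s := by
  rw [evalC, RatFunc.eval, eval_map, eval_map]

lemma poly_reg (p : ℝ[X]) (s : ℂ) : algebraMap ℝ[X] (RatFunc ℝ) p ∈ reg s := by
  rw [mem_reg, IsPoleAt, RatFunc.denom_algebraMap]; simp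

lemma evalC_poly (p : ℝ[X]) (s : ℂ) : evalC (algebraMap ℝ[X] (RatFunc ℝ) p) s = (toC p).eval s := by
  rw [evalC_eq, RatFunc.denom_algebraMap, RatFunc.num_algebraMap]; simp

lemma evalC_div {f : RatFunc ℝ} {a b : ℝ[X]} {s : ℂ} (h : f * algebraMap _ _ b = algebraMap _ _ a)
    (hf : f ∈ reg s) (hb : (toC b).eval s ≠ 0) : evalC f s = (toC a).eval s / (toC b).eval s := by
  rw [eq_div_iff hb, ← evalC_poly, ← evalC_poly, ← h]
  exact (map_mul (ev s) ⟨f, hf⟩ ⟨_, poly_reg b s⟩).symm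

lemma isUnit_reg {s : ℂ} (f : reg s) (h : ev s f ≠ 0) : IsUnit f := by
  have hf0 : f.1 ≠ 0 := by
    intro h0; apply h; rw [ev_apply, h0]; exact RatFunc.eval_zero _ _
  have hinv : (f.1)⁻¹ ∈ reg s := by
    refine not_pole_of_dvd (RatFunc.denom_inv_dvd hf0) ?_
    intro h0; apply h
    rw [ev_apply, evalC_eq, eval_map, h0, zero_div]
  exact IsUnit.of_mul_eq_one ⟨_, hinv⟩ (Subtype.ext (mul_inv_cancel₀ hf0))

/-- no entry of `G` has a pole at `s` -/
def RegM (G : Matrix (Fin n) (Fin n) (RatFunc ℝ)) (s : ℂ) : Prop := ∀ i j, G i j ∈ reg s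

lemma regM_iff (G : Matrix (Fin n) (Fin n) (RatFunc ℝ)) (s : ℂ) : RegM G s ↔ ¬ HasPole G s := by
  simp [RegM, HasPole, mem_reg]

abbrev sub' (s : ℂ) : reg s →+* RatFunc ℝ := (reg s).subtype

lemma regM_lift {G : Matrix (Fin n) (Fin n) (RatFunc ℝ)} {s : ℂ} (h : RegM G s) :
    ∃ G' : Matrix (Fin n) (Fin n) (reg s), (sub' s).mapMatrix G' = G ∧ evalM G s = (ev s).mapMatrix G' :=
  ⟨Matrix.of fun i j => ⟨G i j, h i j⟩, by ext i j; rfl, by ext i j; rfl⟩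

lemma regM_of (s : ℂ) (G' : Matrix (Fin n) (Fin n) (reg s)) : RegM ((sub' s).mapMatrix G') s :=
  fun i j => (G' i j).2

lemma evalM_of (s : ℂ) (G' : Matrix (Fin n) (Fin n) (reg s)) :
    evalM ((sub' s).mapMatrix G') s = (ev s).mapMatrix G' := rfl

variable {A B : Matrix (Fin n) (Fin n) (RatFunc ℝ)} {s : ℂ}

lemma regM_mul (hA : RegM A s) (hB : RegM B s) : RegM (A * B) s ∧ evalM (A * B) s = evalM A s * evalM B s := by
  obtain ⟨A', rfl, hA'⟩ := regM_lift hA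
  obtain ⟨B', rfl, hB'⟩ := regM_lift hB
  rw [← map_mul]
  exact ⟨regM_of _ _, by rw [evalM_of, evalM_of, evalM_of, map_mul]⟩

lemma regM_add (hA : RegM A s) (hB : RegM B s) : RegM (A + B) s ∧ evalM (A + B) s = evalM A s + evalM B s := by
  obtain ⟨A', rfl, hA'⟩ := regM_lift hA
  obtain ⟨B', rfl, hB'⟩ := regM_lift hB
  rw [← map_add]
  exact ⟨regM_of _ _, by rw [evalM_of, evalM_of, evalM_of, map_add]⟩

lemma regM_sub (hA : RegM A s) (hB : RegM B s) : RegM (A - B) s ∧ evalM (A - B) s = evalM A s - evalM B s := by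
  obtain ⟨A', rfl, hA'⟩ := regM_lift hA
  obtain ⟨B', rfl, hB'⟩ := regM_lift hB
  rw [← map_sub]
  exact ⟨regM_of _ _, by rw [evalM_of, evalM_of, evalM_of, map_sub]⟩

lemma regM_one : RegM (1 : Matrix (Fin n) (Fin n) (RatFunc ℝ)) s ∧
    evalM (1 : Matrix (Fin n) (Fin n) (RatFunc ℝ)) s = 1 := by
  rw [← map_one (sub' s).mapMatrix]
  exact ⟨regM_of _ _, by rw [evalM_of, map_one]⟩

lemma regM_inv (hA : RegM A s) (hd : (evalM A s).det ≠ 0) :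
    A.det ≠ 0 ∧ RegM A⁻¹ s ∧ evalM A⁻¹ s = (evalM A s)⁻¹ := by
  obtain ⟨A', rfl, hA'⟩ := regM_lift hA
  rw [hA', ← RingHom.map_det] at hd
  have hu : IsUnit A'.det := isUnit_reg _ hd
  have h1 : A'⁻¹ * A' = 1 := Matrix.nonsing_inv_mul A' hu
  have h2 : (sub' s).mapMatrix A'⁻¹ * (sub' s).mapMatrix A' = 1 := by rw [← map_mul, h1, map_one]
  have h3 : (ev s).mapMatrix A'⁻¹ * (ev s).mapMatrix A' = 1 := by rw [← map_mul, h1, map_one]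
  have h4 : ((sub' s).mapMatrix A')⁻¹ = (sub' s).mapMatrix A'⁻¹ := Matrix.inv_eq_left_inv h2
  refine ⟨?_, ?_, ?_⟩
  · rw [← RingHom.map_det]
    intro h0
    exact hu.ne_zero (Subtype.ext h0)
  · rw [h4]; exact regM_of _ _
  · rw [h4, evalM_of, evalM_of, Matrix.inv_eq_left_inv h3]

/-! conjugation -/
lemma toC_conj (p : ℝ[X]) (s : ℂ) : (toC p).eval (star s) = star ((toC p).eval s) := by
  rw [eval_map, eval_map]
  have := Polynomial.hom_eval₂ p (algebraMap ℝ ℂ) (starRingEnd ℂ) s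
  rw [← starRingEnd_apply, ← starRingEnd_apply, this]
  congr 1
  ext x; simp

lemma pole_conj (f : RatFunc ℝ) (s : ℂ) : f ∈ reg (star s) ↔ f ∈ reg s := by
  simp only [mem_reg, not_pole_iff, toC_conj, ne_eq, star_eq_zero]

lemma evalC_conj (f : RatFunc ℝ) (s : ℂ) : evalC f (star s) = star (evalC f s) := by
  rw [evalC_eq, evalC_eq, toC_conj, toC_conj, star_div₀]

/-! continuity -/
lemma evalC_cont {f : RatFunc ℝ} {s : ℂ} (h : f ∈ reg s) : ContinuousAt (evalC f) s := by
  have : evalC f = fun z => (toC f.num).eval z / (toC f.denom).eval z := funext (evalC_eq f)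
  rw [this]
  exact (toC f.num).continuousAt.div (toC f.denom).continuousAt ((not_pole_iff f s).mp h)

lemma evalM_cont {G : Matrix (Fin n) (Fin n) (RatFunc ℝ)} {s : ℂ} (h : RegM G s) :
    ContinuousAt (evalM G) s :=
  continuousAt_pi.mpr fun i => continuousAt_pi.mpr fun j => evalC_cont (h i j)

lemma toC_ne {p : ℝ[X]} (h : p ≠ 0) : toC p ≠ 0 :=
  (Polynomial.map_ne_zero_iff (algebraMap ℝ ℂ).injective).mpr h

lemma denC_ne (f : RatFunc ℝ) : toC f.denom ≠ 0 := toC_ne f.denom_ne_zero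

lemma tendsto_path (s0 : ℂ) : Tendsto (fun x : ℝ => s0 + (x : ℂ)) (𝓝[>] 0) (𝓝[≠] s0) := by
  apply tendsto_nhdsWithin_of_tendsto_nhds_of_eventually_within
  · apply Tendsto.mono_left _ nhdsWithin_le_nhds
    apply Continuous.tendsto' (by fun_prop); simp
  · filter_upwards [self_mem_nhdsWithin] with x hx
    simpa using (ne_of_gt hx)

lemma mult_le (f : RatFunc ℝ) (s0 : ℂ) (N : ℕ) (K : ℝ)
    (h : ∀ᶠ x : ℝ in 𝓝[>] 0, ‖(x : ℂ) ^ N * evalC f (s0 + x)‖ ≤ K) :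
    (toC f.denom).rootMultiplicity s0 ≤ N := by
  by_contra! hlt
  obtain ⟨b, hb⟩ := pow_rootMultiplicity_dvd (toC f.denom) s0
  obtain ⟨e, he⟩ : ∃ e, (toC f.denom).rootMultiplicity s0 = N + 1 + e := ⟨_, (Nat.add_sub_of_le hlt).symm⟩
  rw [he] at hb
  have hcop : IsCoprime (toC f.num) (toC f.denom) := (RatFunc.isCoprime_num_denom f).map (mapRingHom (algebraMap ℝ ℂ))
  have hroot : (toC f.denom).eval s0 = 0 := by
    rw [hb]; simp
  have hnum : (toC f.num).eval s0 ≠ 0 := by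
    intro h0
    obtain ⟨u, v, huv⟩ := hcop
    have := congrArg (eval s0) huv
    simp [h0, hroot] at this
  apply hnum
  have h1 : Tendsto (fun x : ℝ => ‖(toC f.num).eval (s0 + x)‖) (𝓝[>] 0) (𝓝 ‖(toC f.num).eval s0‖) := by
    apply Tendsto.mono_left _ nhdsWithin_le_nhds
    apply Continuous.tendsto'
    · exact ((toC f.num).continuous.comp (by fun_prop)).norm
    · simp
  have h2 : Tendsto (fun x : ℝ => K * ‖(x : ℂ) ^ (1 + e) * b.eval (s0 + x)‖) (𝓝[>] 0) (𝓝 0) := by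
    apply Tendsto.mono_left _ nhdsWithin_le_nhds
    apply Continuous.tendsto'
    · have := b.continuous.comp (show Continuous (fun x : ℝ => s0 + (x : ℂ)) by fun_prop)
      simp only [Function.comp_def] at this
      fun_prop
    · simp
  have h3 : ‖(toC f.num).eval s0‖ ≤ 0 := by
    refine le_of_tendsto_of_tendsto h1 h2 ?_
    filter_upwards [h, self_mem_nhdsWithin, (tendsto_path s0).eventually (evne (denC_ne f) s0)] with x hx hx0 hd
    rw [evalC_eq] at hx
    have hx0' : (x : ℂ) ≠ 0 := by exact_mod_cast (ne_of_gt hx0)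
    have e1 : (toC f.denom).eval (s0 + x) = (x : ℂ) ^ (N + 1 + e) * b.eval (s0 + x) := by
      conv_lhs => rw [hb]
      simp
    have e2 : (toC f.num).eval (s0 + x) =
      ((x : ℂ) ^ N * ((toC f.num).eval (s0 + x) / (toC f.denom).eval (s0 + x))) * ((x : ℂ) ^ (1 + e) * b.eval (s0 + x)) := by
      have hb0 : b.eval (s0 + x) ≠ 0 := by
        intro h0; apply hd; rw [e1, h0, mul_zero]
      rw [e1]
      field_simp
      ring
    rw [e2, norm_mul]
    gcongr
  exact norm_le_zero_iff.mp h3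

lemma reg_of_bdd (f : RatFunc ℝ) (s0 : ℂ) (K : ℝ)
    (h : ∀ᶠ x : ℝ in 𝓝[>] 0, ‖evalC f (s0 + x)‖ ≤ K) : f ∈ reg s0 := by
  have := mult_le f s0 0 K (by simpa using h)
  rw [mem_reg, not_pole_iff]
  intro h0
  have := (rootMultiplicity_pos (denC_ne f)).mpr h0
  omega

lemma lim_of_bdd (f : RatFunc ℝ) (s0 : ℂ) (K : ℝ)
    (h : ∀ᶠ x : ℝ in 𝓝[>] 0, ‖(x : ℂ) * evalC f (s0 + x)‖ ≤ K) :
    ∃ L : ℂ, Tendsto (fun s => (s - s0) * evalC f s) (𝓝[≠] s0) (𝓝 L) := by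
  have hm := mult_le f s0 1 K (by simpa using h)
  by_cases h0 : f ∈ reg s0
  · refine ⟨(s0 - s0) * evalC f s0, ?_⟩
    apply Tendsto.mono_left _ nhdsWithin_le_nhds
    have hc := evalC_cont h0
    exact ContinuousAt.tendsto (f := fun s => (s - s0) * evalC f s) (by fun_prop)
  · rw [mem_reg, not_pole_iff, not_not] at h0
    obtain ⟨b, hb⟩ := dvd_iff_isRoot.mpr h0
    have hb0 : b.eval s0 ≠ 0 := by
      intro hb0
      obtain ⟨c, rfl⟩ := dvd_iff_isRoot.mpr hb0
      have : (X - C s0) ^ 2 ∣ toC f.denom := ⟨c, by rw [hb]; ring⟩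
      have := (le_rootMultiplicity_iff (denC_ne f)).mpr this
      omega
    refine ⟨(toC f.num).eval s0 / b.eval s0, ?_⟩
    have ht : Tendsto (fun s => (toC f.num).eval s / b.eval s) (𝓝[≠] s0) (𝓝 ((toC f.num).eval s0 / b.eval s0)) :=
      Tendsto.mono_left ((toC f.num).continuousAt.div b.continuousAt hb0).tendsto nhdsWithin_le_nhds
    refine ht.congr' ?_
    filter_upwards [self_mem_nhdsWithin, evne (denC_ne f) s0] with z hz hd
    have hz' : z - s0 ≠ 0 := sub_ne_zero.mpr hz
    rw [evalC_eq]
    rw [hb] at hd ⊢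
    simp only [eval_mul, eval_sub, eval_X, eval_C] at hd ⊢
    have := right_ne_zero_of_mul hd
    field_simp

lemma evalC_real (f : RatFunc ℝ) (x : ℝ) : evalC f x = ((f.num.eval x / f.denom.eval x : ℝ) : ℂ) := by
  rw [evalC, RatFunc.eval]
  push_cast
  congr 1 <;> exact (Polynomial.eval₂_at_apply (algebraMap ℝ ℂ) x)

lemma deg_of_bdd (f : RatFunc ℝ) (N : ℕ) (K : ℝ)
    (h : ∀ᶠ x : ℝ in atTop, ‖(x : ℂ) ^ N * evalC f x‖ ≤ K) :
    (X ^ N * f.num).degree ≤ f.denom.degree := by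
  by_contra! hlt
  have := Polynomial.abs_div_tendsto_atTop_atTop_of_degree_gt _ _ hlt f.denom_ne_zero
  obtain ⟨x, h1, h2⟩ := (h.and (this.eventually_gt_atTop K)).exists
  rw [evalC_real, ← Complex.ofReal_pow, ← Complex.ofReal_mul, Complex.norm_real, Real.norm_eq_abs, ← mul_div_assoc] at h1
  simp only [eval_mul, eval_pow, eval_X] at h2
  linarith

lemma bdd_of_proper (f : RatFunc ℝ) (h : f.num.degree ≤ f.denom.degree) :
    ∃ K, ∀ᶠ x : ℝ in atTop, ‖evalC f x‖ ≤ K := by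
  obtain ⟨K, hK⟩ := (Polynomial.isBigO_atTop_of_degree_le _ _ h).bound
  refine ⟨K, ?_⟩
  filter_upwards [hK, Polynomial.eventually_atTop_not_isRoot f.denom f.denom_ne_zero] with x h1 h2
  rw [evalC_real, Complex.norm_real, norm_div, div_le_iff₀ (norm_pos_iff.mpr h2)]
  exact h1

lemma reg_atTop (f : RatFunc ℝ) : ∀ᶠ x : ℝ in atTop, f ∈ reg (x : ℂ) := by
  filter_upwards [Polynomial.eventually_atTop_not_isRoot f.denom f.denom_ne_zero] with x h2
  rw [mem_reg, IsPoleAt]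
  have := (Polynomial.eval₂_at_apply (p := f.denom) (algebraMap ℝ ℂ) x)
  rw [Complex.coe_algebraMap] at this
  rw [this]
  intro h; apply h2; exact_mod_cast h

def ProperF (f : RatFunc ℝ) : Prop := f.num.degree ≤ f.denom.degree

lemma proper_iff (f : RatFunc ℝ) : ProperF f ↔ ∃ K, ∀ᶠ x : ℝ in atTop, ‖evalC f x‖ ≤ K := by
  refine ⟨bdd_of_proper f, fun ⟨K, hK⟩ => ?_⟩
  have := deg_of_bdd f 0 K (by simpa using hK)
  rwa [pow_zero, one_mul] at this

lemma proper_mul {f g : RatFunc ℝ} (hf : ProperF f) (hg : ProperF g) : ProperF (f * g) := by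
  rw [proper_iff] at *
  obtain ⟨K, hK⟩ := hf
  obtain ⟨M, hM⟩ := hg
  refine ⟨K * M, ?_⟩
  filter_upwards [hK, hM, reg_atTop f, reg_atTop g] with x h1 h2 h3 h4
  rw [show evalC (f * g) x = evalC f x * evalC g x from RatFunc.eval_mul _ _ h3 h4, norm_mul]
  exact mul_le_mul h1 h2 (norm_nonneg _) ((norm_nonneg _).trans h1)

lemma proper_add {f g : RatFunc ℝ} (hf : ProperF f) (hg : ProperF g) : ProperF (f + g) := by
  rw [proper_iff] at *
  obtain ⟨K, hK⟩ := hf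
  obtain ⟨M, hM⟩ := hg
  refine ⟨K + M, ?_⟩
  filter_upwards [hK, hM, reg_atTop f, reg_atTop g] with x h1 h2 h3 h4
  rw [show evalC (f + g) x = evalC f x + evalC g x from RatFunc.eval_add _ _ h3 h4]
  exact (norm_add_le _ _).trans (add_le_add h1 h2)

/-- the subring of `RH∞` scalar functions -/
def rh : Subsemiring (RatFunc ℝ) where
  carrier := {f | ProperF f ∧ ∀ s : ℂ, 0 ≤ s.re → f ∈ reg s}
  mul_mem' := fun ha hb => ⟨proper_mul ha.1 hb.1, fun s hs => (reg s).mul_mem (ha.2 s hs) (hb.2 s hs)⟩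
  add_mem' := fun ha hb => ⟨proper_add ha.1 hb.1, fun s hs => (reg s).add_mem (ha.2 s hs) (hb.2 s hs)⟩
  one_mem' := ⟨by simp [ProperF], fun s _ => (reg s).one_mem⟩
  zero_mem' := ⟨by simp [ProperF], fun s _ => (reg s).zero_mem⟩

lemma memRH_iff {m : Type*} [Fintype m] (G : Matrix m m (RatFunc ℝ)) : MemRHinf G ↔ ∀ i j, G i j ∈ rh := by
  constructor
  · rintro ⟨h1, h2⟩ i j
    exact ⟨h1 i j, fun s hs => h2 s hs i j⟩
  · intro h
    exact ⟨fun i j => (h i j).1, fun s hs i j => (h i j).2 s hs⟩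

end Part2

section Part3

/-- quadratic form -/
def qf (M : Matrix (Fin n) (Fin n) ℂ) (y : Fin n → ℂ) : ℂ := star y ⬝ᵥ (M *ᵥ y)

/-- squared Euclidean norm -/
def nsq (y : Fin n → ℂ) : ℝ := ∑ i, ‖y i‖ ^ 2

lemma nsq_nonneg (y : Fin n → ℂ) : 0 ≤ nsq y := Finset.sum_nonneg fun _ _ => sq_nonneg _

lemma le_nsq (y : Fin n → ℂ) (i : Fin n) : ‖y i‖ ^ 2 ≤ nsq y :=
  Finset.single_le_sum (f := fun i => ‖y i‖ ^ 2) (fun _ _ => sq_nonneg _) (Finset.mem_univ i)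

lemma nsq_pos {y : Fin n → ℂ} (h : y ≠ 0) : 0 < nsq y := by
  obtain ⟨i, hi⟩ := Function.ne_iff.mp h
  have : 0 < ‖y i‖ := norm_pos_iff.mpr hi
  exact lt_of_lt_of_le (by positivity) (le_nsq y i)

lemma star_dot_self (y : Fin n → ℂ) : star y ⬝ᵥ y = (nsq y : ℂ) := by
  simp only [dotProduct, nsq, Pi.star_apply, RCLike.star_def]
  push_cast
  exact Finset.sum_congr rfl fun i _ => Complex.conj_mul' (y i)

lemma qf_eq (M : Matrix (Fin n) (Fin n) ℂ) (y : Fin n → ℂ) :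
    qf M y = ∑ i, star (y i) * ∑ j, M i j * y j := rfl

lemma qf_add (M N : Matrix (Fin n) (Fin n) ℂ) (y : Fin n → ℂ) : qf (M + N) y = qf M y + qf N y := by
  simp [qf, add_mulVec, dotProduct_add]

lemma qf_sub (M N : Matrix (Fin n) (Fin n) ℂ) (y : Fin n → ℂ) : qf (M - N) y = qf M y - qf N y := by
  simp [qf, sub_mulVec, dotProduct_sub]

lemma qf_neg (M : Matrix (Fin n) (Fin n) ℂ) (y : Fin n → ℂ) : qf (-M) y = - qf M y := by
  simp [qf, neg_mulVec, dotProduct_neg]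

lemma qf_smul (a : ℂ) (M : Matrix (Fin n) (Fin n) ℂ) (y : Fin n → ℂ) : qf (a • M) y = a * qf M y := by
  simp [qf, smul_mulVec, dotProduct_smul]

lemma qf_one (y : Fin n → ℂ) : qf 1 y = (nsq y : ℂ) := by simp [qf, star_dot_self]

lemma star_dot (u v : Fin n → ℂ) : star (star u ⬝ᵥ v) = star v ⬝ᵥ u := by
  rw [← star_dotProduct_star, star_star, dotProduct_comm]


lemma qf_ct (M : Matrix (Fin n) (Fin n) ℂ) (y : Fin n → ℂ) : qf Mᴴ y = star (qf M y) := by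
  rw [qf, qf, star_dot, star_mulVec, ← dotProduct_mulVec]

lemma qf_conj (M : Matrix (Fin n) (Fin n) ℂ) (y : Fin n → ℂ) :
    qf (M.map star) y = star (qf M (star y)) := by
  simp only [qf_eq, star_sum, star_mul', map_apply, Pi.star_apply, star_star]

lemma qf_niKer (M : Matrix (Fin n) (Fin n) ℂ) (y : Fin n → ℂ) :
    qf (niKer M) y = ((-2 * (qf M y).im : ℝ) : ℂ) := by
  rw [niKer, qf_smul, qf_sub, qf_ct]
  apply Complex.ext <;> simp <;> ring

lemma niKer_herm (M : Matrix (Fin n) (Fin n) ℂ) : (niKer M).IsHermitian := by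
  rw [IsHermitian, niKer, conjTranspose_smul, conjTranspose_sub, conjTranspose_conjTranspose]
  ext i j
  simp
  ring

lemma niKer_psd (M : Matrix (Fin n) (Fin n) ℂ) : (niKer M).PosSemidef ↔ ∀ y, (qf M y).im ≤ 0 := by
  rw [posSemidef_iff_dotProduct_mulVec]
  have : ∀ y, 0 ≤ star y ⬝ᵥ (niKer M *ᵥ y) ↔ (qf M y).im ≤ 0 := by
    intro y
    change 0 ≤ qf (niKer M) y ↔ _
    rw [qf_niKer, Complex.zero_le_real]
    constructor <;> intro h <;> linarith
  simp [niKer_herm, this]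

lemma niKer_pd (M : Matrix (Fin n) (Fin n) ℂ) : (niKer M).PosDef ↔ ∀ y, y ≠ 0 → (qf M y).im < 0 := by
  rw [posDef_iff_dotProduct_mulVec]
  have : ∀ y, 0 < star y ⬝ᵥ (niKer M *ᵥ y) ↔ (qf M y).im < 0 := by
    intro y
    change 0 < qf (niKer M) y ↔ _
    rw [qf_niKer, Complex.zero_lt_real]
    constructor <;> intro h <;> linarith
  simp [niKer_herm, this]

lemma qf_bound (M : Matrix (Fin n) (Fin n) ℂ) (y : Fin n → ℂ) :
    ‖qf M y‖ ≤ (∑ i, ∑ j, ‖M i j‖) * nsq y := by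
  rw [qf_eq, Finset.sum_mul]
  refine (norm_sum_le _ _).trans (Finset.sum_le_sum fun i _ => ?_)
  rw [Finset.mul_sum, Finset.sum_mul]
  refine (norm_sum_le _ _).trans (Finset.sum_le_sum fun j _ => ?_)
  rw [norm_mul, norm_mul, norm_star]
  have h1 := le_nsq y i
  have h2 := le_nsq y j
  have h3 : ‖y i‖ * ‖y j‖ ≤ nsq y := by nlinarith [sq_nonneg (‖y i‖ - ‖y j‖)]
  calc ‖y i‖ * (‖M i j‖ * ‖y j‖) = ‖M i j‖ * (‖y i‖ * ‖y j‖) := by ring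
    _ ≤ _ := by gcongr

lemma qf_cont_M (y : Fin n → ℂ) : Continuous fun M : Matrix (Fin n) (Fin n) ℂ => qf M y := by
  unfold qf; fun_prop

lemma qf_cont_y (M : Matrix (Fin n) (Fin n) ℂ) : Continuous fun y : Fin n → ℂ => qf M y := by
  unfold qf; fun_prop

lemma qf_scale (M : Matrix (Fin n) (Fin n) ℂ) (y : Fin n → ℂ) (t : ℝ) :
    qf M ((t : ℂ) • y) = ((t ^ 2 : ℝ) : ℂ) * qf M y := by
  simp only [qf, mulVec_smul, dotProduct_smul, star_smul, smul_dotProduct, smul_eq_mul]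
  simp; ring

lemma coercive {M : Matrix (Fin n) (Fin n) ℂ} (h : ∀ y, y ≠ 0 → 0 < (qf M y).re) :
    ∃ c : ℝ, 0 < c ∧ ∀ y, c * nsq y ≤ (qf M y).re := by
  by_cases hne : (Metric.sphere (0 : Fin n → ℂ) 1).Nonempty
  · obtain ⟨z, hz, hmin⟩ := (isCompact_sphere (0 : Fin n → ℂ) 1).exists_isMinOn hne
      (Complex.continuous_re.comp (qf_cont_y M)).continuousOn
    have hz0 : z ≠ 0 := by rintro rfl; simp at hz
    refine ⟨(qf M z).re / (n + 1), div_pos (h z hz0) (by positivity), fun y => ?_⟩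
    by_cases hy : y = 0
    · subst hy; simp [nsq, qf]
    have hny : 0 < ‖y‖ := norm_pos_iff.mpr hy
    set w : Fin n → ℂ := ((‖y‖⁻¹ : ℝ) : ℂ) • y with hw
    have hyw : y = ((‖y‖ : ℝ) : ℂ) • w := by
      rw [hw, smul_smul, ← Complex.ofReal_mul, mul_inv_cancel₀ hny.ne']; simp
    have hws : w ∈ Metric.sphere (0 : Fin n → ℂ) 1 := by
      rw [mem_sphere_zero_iff_norm, hw, norm_smul, Complex.norm_real, norm_inv, norm_norm, inv_mul_cancel₀ hny.ne']
    have h1 : (qf M z).re ≤ (qf M w).re := hmin hws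
    have h2 : (qf M y).re = ‖y‖ ^ 2 * (qf M w).re := by
      conv_lhs => rw [hyw, qf_scale, Complex.re_ofReal_mul]
    have h3 : nsq y ≤ n * ‖y‖ ^ 2 := by
      calc nsq y ≤ ∑ i : Fin n, ‖y‖ ^ 2 := by
            apply Finset.sum_le_sum; intro i _
            gcongr; exact norm_le_pi_norm y i
        _ = n * ‖y‖ ^ 2 := by simp
    rw [h2, div_mul_eq_mul_div, div_le_iff₀ (by positivity)]
    have h4 := h z hz0
    have h5 : 0 < ‖y‖ ^ 2 := by positivity
    calc (qf M z).re * nsq y ≤ (qf M z).re * (n * ‖y‖ ^ 2) := by gcongr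
      _ ≤ (qf M w).re * ((n + 1) * ‖y‖ ^ 2) := by
        have : 0 < (qf M w).re := h4.trans_le h1
        gcongr
        linarith
      _ = _ := by ring
  · refine ⟨1, one_pos, fun y => ?_⟩
    have : y = 0 := by
      by_contra hy
      apply hne
      refine ⟨((‖y‖⁻¹ : ℝ) : ℂ) • y, ?_⟩
      rw [mem_sphere_zero_iff_norm, norm_smul, Complex.norm_real, norm_inv, norm_norm, inv_mul_cancel₀ (norm_ne_zero_iff.mpr hy)]
    subst this; simp [nsq, qf]

lemma coord_bound {y : Fin n → ℂ} {c K : ℝ} (hc : 0 < c) {j : Fin n} (hK : 0 ≤ K)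
    (h : c * nsq y ≤ K * ‖y j‖) (i : Fin n) : ‖y i‖ ≤ K / c := by
  have h1 := le_nsq y j
  have h2 := le_nsq y i
  have hj : ‖y j‖ ≤ K / c := by
    rw [le_div_iff₀ hc]
    by_contra! hlt
    have hpos : 0 < ‖y j‖ := by
      by_contra! h0
      have : ‖y j‖ = 0 := le_antisymm h0 (norm_nonneg _)
      rw [this, zero_mul] at hlt; linarith
    nlinarith
  have h3 : c * ‖y i‖ ^ 2 ≤ K * (K / c) := by
    calc c * ‖y i‖ ^ 2 ≤ c * nsq y := by gcongr
      _ ≤ K * ‖y j‖ := h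
      _ ≤ _ := by gcongr
  have h4 : ‖y i‖ ^ 2 ≤ (K / c) ^ 2 := by
    have : (K / c) ^ 2 = K * (K / c) / c := by ring
    rw [this, le_div_iff₀ hc]; linarith
  exact (le_abs_self _).trans (abs_le_of_sq_le_sq h4 (by positivity))

lemma herm_of_qf {R : Matrix (Fin n) (Fin n) ℂ} (h : ∀ y, 0 ≤ qf R y) : R.PosSemidef := by
  rw [posSemidef_iff_dotProduct_mulVec]
  refine ⟨?_, h⟩
  rw [← isSymmetric_toEuclideanLin_iff, LinearMap.isSymmetric_iff_inner_map_self_real]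
  intro v
  have h1 := h (WithLp.ofLp v)
  have : inner ℂ (toEuclideanLin R v) v = star (qf R (WithLp.ofLp v)) := by
    rw [EuclideanSpace.inner_eq_star_dotProduct, qf, star_dot, dotProduct_comm]
    rfl
  rw [this]
  have h2 : star (qf R (WithLp.ofLp v)) = qf R (WithLp.ofLp v) := by
    apply Complex.ext <;> simp [(Complex.nonneg_iff.mp h1).2.symm]
  rw [h2]; exact h2

/-! common denominators -/
lemma common (G : Matrix (Fin n) (Fin n) (RatFunc ℝ)) : ∃ (q : ℝ[X]) (N : Matrix (Fin n) (Fin n) ℝ[X]),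
    q ≠ 0 ∧ (∀ i j, G i j * algebraMap _ _ q = algebraMap _ _ (N i j)) ∧
    (∀ i j, (G i j).num * q = N i j * (G i j).denom) ∧
    ∀ s, (toC q).eval s ≠ 0 ↔ RegM G s := by
  set q : ℝ[X] := ∏ i, ∏ j, (G i j).denom with hq
  have hdvd : ∀ i j, (G i j).denom ∣ q := fun i j =>
    (Finset.dvd_prod_of_mem (fun j => (G i j).denom) (Finset.mem_univ j)).trans
      (Finset.dvd_prod_of_mem (fun i => ∏ j, (G i j).denom) (Finset.mem_univ i))
  choose r hr using hdvd
  refine ⟨q, Matrix.of fun i j => (G i j).num * r i j, ?_, ?_, ?_, ?_⟩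
  · exact Finset.prod_ne_zero_iff.mpr fun i _ => Finset.prod_ne_zero_iff.mpr fun j _ => RatFunc.denom_ne_zero _
  · intro i j
    have h0 : (algebraMap ℝ[X] (RatFunc ℝ) (G i j).denom) ≠ 0 := RatFunc.algebraMap_ne_zero (RatFunc.denom_ne_zero _)
    rw [hr i j]
    have h1 : G i j * algebraMap _ _ (G i j).denom = algebraMap _ _ (G i j).num := by
      rw [← eq_div_iff h0, RatFunc.num_div_denom]
    rw [of_apply, map_mul, map_mul, ← mul_assoc, h1]
  · intro i j
    rw [of_apply]
    conv_lhs => rw [hr i j]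
    ring
  · intro s
    have : (toC q).eval s = ∏ i, ∏ j, (toC (G i j).denom).eval s := by
      simp only [toC, hq, Polynomial.map_prod, eval_prod]
    rw [this]
    simp only [Finset.prod_ne_zero_iff, Finset.mem_univ, true_imp_iff, RegM, mem_reg, not_pole_iff]

/-- the polynomial representing `q(s) u* G(s) u` -/
def qpoly (N : Matrix (Fin n) (Fin n) ℝ[X]) (u : Fin n → ℂ) : ℂ[X] :=
  ∑ i, star (u i) • ∑ j, u j • toC (N i j)

lemma qpoly_eval {G : Matrix (Fin n) (Fin n) (RatFunc ℝ)} {q : ℝ[X]} {N : Matrix (Fin n) (Fin n) ℝ[X]}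
    (h : ∀ i j, G i j * algebraMap _ _ q = algebraMap _ _ (N i j)) {s : ℂ} (hs : RegM G s)
    (hq : (toC q).eval s ≠ 0) (u : Fin n → ℂ) :
    (qpoly N u).eval s = (toC q).eval s * qf (evalM G s) u := by
  simp only [qpoly, qf_eq, eval_finsetSum]
  rw [Finset.mul_sum]
  refine Finset.sum_congr rfl fun i _ => ?_
  rw [eval_smul, eval_finsetSum, smul_eq_mul, mul_left_comm]
  congr 1
  rw [Finset.mul_sum]
  refine Finset.sum_congr rfl fun j _ => ?_
  have := evalC_div (h i j) (hs i j) hq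
  rw [evalM, of_apply, this, eval_smul, smul_eq_mul]
  field_simp

lemma toC_degree (p : ℝ[X]) : (toC p).degree = p.degree := degree_map _ _

lemma qpoly_degree_le {N : Matrix (Fin n) (Fin n) ℝ[X]} {d : ℕ}
    (h : ∀ i j, (N i j).degree ≤ d) (u : Fin n → ℂ) : (qpoly N u).degree ≤ d := by
  rw [← mem_degreeLE]
  refine Submodule.sum_mem _ fun i _ => Submodule.smul_mem _ _ (Submodule.sum_mem _ fun j _ => Submodule.smul_mem _ _ ?_)
  rw [mem_degreeLE, toC_degree]; exact h i j

lemma qpoly_degree_lt {N : Matrix (Fin n) (Fin n) ℝ[X]} {d : ℕ}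
    (h : ∀ i j, (N i j).degree < d) (u : Fin n → ℂ) : (qpoly N u).degree < d := by
  rw [← mem_degreeLT]
  refine Submodule.sum_mem _ fun i _ => Submodule.smul_mem _ _ (Submodule.sum_mem _ fun j _ => Submodule.smul_mem _ _ ?_)
  rw [mem_degreeLT, toC_degree]; exact h i j

lemma deg_lt_of {a b c q : ℝ[X]} (h : a * q = c * b) (hb : b ≠ 0) (hq : q ≠ 0) (hlt : a.degree < b.degree) :
    c.degree < q.degree := by
  by_cases hc : c = 0
  · subst hc; rw [degree_zero]; exact bot_lt_iff_ne_bot.mpr (by rwa [ne_eq, degree_eq_bot])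
  have ha : a ≠ 0 := by rintro rfl; rw [zero_mul] at h; exact mul_ne_zero hc hb h.symm
  have := congrArg natDegree h
  rw [natDegree_mul ha hq, natDegree_mul hc hb] at this
  rw [degree_eq_natDegree hc, degree_eq_natDegree hq]
  rw [degree_eq_natDegree ha, degree_eq_natDegree hb] at hlt
  norm_cast at *
  omega

lemma deg_le_of {a b c q : ℝ[X]} (h : a * q = c * b) (hb : b ≠ 0) (hq : q ≠ 0) (hlt : a.degree ≤ b.degree) :
    c.degree ≤ q.degree := by
  by_cases hc : c = 0
  · subst hc; rw [degree_zero]; exact bot_le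
  have ha : a ≠ 0 := by rintro rfl; rw [zero_mul] at h; exact mul_ne_zero hc hb h.symm
  have := congrArg natDegree h
  rw [natDegree_mul ha hq, natDegree_mul hc hb] at this
  rw [degree_eq_natDegree hc, degree_eq_natDegree hq]
  rw [degree_eq_natDegree ha, degree_eq_natDegree hb] at hlt
  norm_cast at *
  omega

lemma evalM_conj (G : Matrix (Fin n) (Fin n) (RatFunc ℝ)) (s : ℂ) : evalM G (star s) = (evalM G s).map star := by
  ext i j; exact evalC_conj _ _

lemma regM_conj (G : Matrix (Fin n) (Fin n) (RatFunc ℝ)) (s : ℂ) : RegM G (star s) ↔ RegM G s := by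
  simp only [RegM, pole_conj]

lemma qf_evalM_conj (G : Matrix (Fin n) (Fin n) (RatFunc ℝ)) (s : ℂ) (u : Fin n → ℂ) :
    qf (evalM G (star s)) u = star (qf (evalM G s) (star u)) := by
  rw [evalM_conj, qf_conj]

lemma jw_neg (ω : ℝ) : jw (-ω) = star (jw ω) := by
  simp [jw]

end Part3

section Part4

lemma re_jw (ω : ℝ) (z : ℂ) : (jw ω * z).re = -ω * z.im := by
  simp [jw]

lemma axis {G : Matrix (Fin n) (Fin n) (RatFunc ℝ)}
    (h : ∀ ω : ℝ, 0 < ω → RegM G (jw ω) → ∀ y, (qf (evalM G (jw ω)) y).im ≤ 0) (ω : ℝ) (h0 : ω ≠ 0)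
    (hr : RegM G (jw ω)) (y : Fin n → ℂ) : 0 ≤ (jw ω * qf (evalM G (jw ω)) y).re := by
  rw [re_jw]
  rcases lt_or_gt_of_ne h0 with hneg | hpos
  · have e : jw ω = star (jw (-ω)) := by rw [← jw_neg, neg_neg]
    rw [e, regM_conj] at hr
    rw [e, qf_evalM_conj]
    have := h (-ω) (by linarith) hr (star y)
    simp only [RCLike.star_def, Complex.conj_im]
    nlinarith
  · have := h ω hpos hr y
    nlinarith

lemma cofinite_jw {q : ℂ[X]} (hq : q ≠ 0) : ∀ᶠ x : ℝ in cofinite, q.eval (jw x) ≠ 0 := by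
  have h1 := eventually_cofinite_not_isRoot hq
  have hinj : Function.Injective jw := by
    intro x y h; simpa [jw] using h
  exact hinj.tendsto_cofinite.eventually h1

lemma NI_pr {P : Matrix (Fin n) (Fin n) (RatFunc ℝ)} (hNI : IsNI P) (hsp : StrictlyProper P)
    (s : ℂ) (hs : 0 < s.re) (u : Fin n → ℂ) : 0 ≤ (s * qf (evalM P s) u).re := by
  obtain ⟨-, hpole, hax, hres, hzero⟩ := hNI
  obtain ⟨q, N, hq, hN, hnd, hreg⟩ := common P
  have hval : ∀ (z : ℂ) (u : Fin n → ℂ), (toC q).eval z ≠ 0 →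
      (X * qpoly N u).eval z / (toC q).eval z = z * qf (evalM P z) u := by
    intro z u hz
    rw [eval_mul, eval_X, qpoly_eval hN ((hreg z).mp hz) hz]
    field_simp
  have hdegq : (toC q).degree = q.natDegree := by rw [toC_degree, degree_eq_natDegree hq]
  have hposres : ∀ ω : ℝ, 0 < ω → (toC q).eval (jw ω) = 0 → ∀ u : Fin n → ℂ, ∃ r : ℝ, 0 ≤ r ∧
      Tendsto (fun z => (z - jw ω) * (z * qf (evalM P z) u)) (𝓝[≠] (jw ω)) (𝓝 (r : ℂ)) := by
    intro ω hω h0 u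
    have hp : HasPole P (jw ω) := by
      by_contra hp; rw [← regM_iff, ← hreg] at hp; exact hp h0
    obtain ⟨R, hR, hlim⟩ := hres ω hω hp
    have hR' : 0 ≤ qf R u := hR.dotProduct_mulVec_nonneg u
    obtain ⟨h1, h2⟩ := Complex.nonneg_iff.mp hR'
    refine ⟨ω * (qf R u).re, mul_nonneg hω.le h1, ?_⟩
    have h3 := ((qf_cont_M u).tendsto R).comp hlim
    have h4 : Tendsto (fun z : ℂ => z * (-Complex.I)) (𝓝[≠] (jw ω)) (𝓝 (jw ω * (-Complex.I))) :=
      Tendsto.mono_left (Continuous.tendsto (by fun_prop) _) nhdsWithin_le_nhds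
    have h5 := h4.mul h3
    have e : jw ω * (-Complex.I) * qf R u = ((ω * (qf R u).re : ℝ) : ℂ) := by
      have : qf R u = ((qf R u).re : ℂ) := Complex.ext (by simp) (by simp [← h2])
      rw [this]
      apply Complex.ext <;> simp [jw]
    rw [e] at h5
    refine h5.congr fun z => ?_
    simp only [Function.comp, qf_smul]
    linear_combination (-z * (z - jw ω) * qf (evalM P z) u) * Complex.I_mul_I
  have key := pr_ind _ (X * qpoly N u) (toC q) rfl (toC_ne hq) ?_ ?_ ?_ ?_ s hs
  · rwa [hval s u] at key
    rw [hreg, regM_iff]; exact hpole s hs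
  · have h1 : (qpoly N u).degree < q.natDegree := by
      apply qpoly_degree_lt
      intro i j
      rw [← degree_eq_natDegree hq]
      exact deg_lt_of (hnd i j) (RatFunc.denom_ne_zero _) hq (hsp i j)
    rw [hdegq, degree_mul, degree_X]
    by_cases h0 : qpoly N u = 0
    · simp [h0]
    rw [degree_eq_natDegree h0] at h1 ⊢
    norm_cast at *
    omega
  · intro z hz
    rw [hreg, regM_iff]; exact hpole z hz
  · filter_upwards [cofinite_jw (toC_ne hq), (Set.finite_singleton (0:ℝ)).eventually_cofinite_notMem] with ω h1 h2
    change 0 ≤ (eval (jw ω) _ / eval (jw ω) _).re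
    rw [hval _ u h1]
    refine axis (fun ω hω hr => ?_) ω h2 ((hreg _).mp h1) u
    exact (niKer_psd _).mp (hax ω hω ((regM_iff _ _).mp hr))
  · intro ω h0
    change (toC q).eval (jw ω) = 0 at h0
    change ∃ r : ℝ, 0 ≤ r ∧ Tendsto (fun z => (z - jw ω) * _) (𝓝[≠] (jw ω)) _
    suffices h : ∃ r : ℝ, 0 ≤ r ∧
      Tendsto (fun z => (z - jw ω) * (z * qf (evalM P z) u)) (𝓝[≠] (jw ω)) (𝓝 (r : ℂ)) by
      obtain ⟨r, hr, hl⟩ := h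
      refine ⟨r, hr, hl.congr' ?_⟩
      filter_upwards [evne (toC_ne hq) (jw ω)] with z hz
      rw [hval z u hz]
    rcases lt_trichotomy ω 0 with h | h | h
    · have e : jw ω = star (jw (-ω)) := by rw [← jw_neg, neg_neg]
      have h0' : (toC q).eval (jw (-ω)) = 0 := by
        rw [e, toC_conj] at h0; simpa using h0
      obtain ⟨r, hr, hl⟩ := hposres (-ω) (by linarith) h0' (star u)
      refine ⟨r, hr, ?_⟩
      have hst : Tendsto (fun z : ℂ => star z) (𝓝[≠] (jw ω)) (𝓝[≠] (jw (-ω))) := by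
        apply tendsto_nhdsWithin_of_tendsto_nhds_of_eventually_within
        · apply Tendsto.mono_left _ nhdsWithin_le_nhds
          rw [jw_neg]
          exact continuous_star.tendsto _
        · filter_upwards [self_mem_nhdsWithin] with z hz
          rw [jw_neg]
          intro hh; apply hz
          exact star_injective hh
      have h6 := (continuous_star.tendsto (r : ℂ)).comp (hl.comp hst)
      have e2 : star (r : ℂ) = r := by simp
      rw [e2] at h6
      refine h6.congr fun z => ?_
      simp only [Function.comp, qf_evalM_conj, star_mul', star_star, star_sub, jw_neg]
    · subst h
      have hj : jw 0 = 0 := by simp [jw]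
      rw [hj] at h0 ⊢
      have hp : HasPole P 0 := by
        by_contra hp; rw [← regM_iff, ← hreg] at hp; exact hp h0
      obtain ⟨-, R, hR, hlim⟩ := hzero hp
      have hR' : 0 ≤ qf R u := hR.dotProduct_mulVec_nonneg u
      obtain ⟨h1, h2⟩ := Complex.nonneg_iff.mp hR'
      refine ⟨(qf R u).re, h1, ?_⟩
      have h3 := ((qf_cont_M u).tendsto R).comp hlim
      have : ((qf R u).re : ℂ) = qf R u := Complex.ext (by simp) (by simp [← h2])
      rw [this]
      refine h3.congr fun z => ?_
      simp only [Function.comp, qf_smul]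
      ring
    · exact hposres ω h h0 u

lemma SNI_pr {G : Matrix (Fin n) (Fin n) (RatFunc ℝ)} (hG : MemRHinf G)
    (hax : ∀ ω : ℝ, 0 < ω → RegM G (jw ω) → ∀ y, (qf (evalM G (jw ω)) y).im ≤ 0)
    (y : Fin n → ℂ) (h0 : (qf (evalM G 0) y).im = 0)
    (s : ℂ) (hs : 0 < s.re) : (s * star (qf (evalM G s) y)).re ≤ s.re * (qf (evalM G 0) y).re := by
  obtain ⟨q, N, hq, hN, hnd, hreg⟩ := common G
  have hregs : ∀ z : ℂ, 0 ≤ z.re → RegM G z := fun z hz i j => hG.2 z hz i j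
  have hqs : ∀ z : ℂ, 0 ≤ z.re → (toC q).eval z ≠ 0 := fun z hz => (hreg z).mpr (hregs z hz)
  set c := qf (evalM G 0) y with hc
  have hroot : (C c * toC q - qpoly N y).IsRoot 0 := by
    rw [IsRoot, eval_sub, eval_mul, eval_C, qpoly_eval hN (hregs 0 (by simp)) (hqs 0 (by simp))]
    ring
  obtain ⟨p1, hp1⟩ := dvd_iff_isRoot.mpr hroot
  have hval : ∀ z : ℂ, 0 ≤ z.re → z ≠ 0 → p1.eval z / (toC q).eval z = (c - qf (evalM G z) y) / z := by
    intro z hz hz0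
    have h1 := congrArg (eval z) hp1
    rw [eval_sub, eval_mul, eval_C, qpoly_eval hN (hregs z hz) (hqs z hz), eval_mul] at h1
    simp only [map_zero, sub_zero, eval_X] at h1
    rw [div_eq_div_iff (hqs z hz) hz0]
    linear_combination -h1
  have key := pr_base p1 (toC q) ?_ hqs ?_ s hs
  · have hs0 : s ≠ 0 := by rintro rfl; simp at hs
    rw [hval s hs.le hs0, Complex.div_re, ← add_div] at key
    have hn : 0 < Complex.normSq s := Complex.normSq_pos.mpr hs0
    rw [le_div_iff₀ hn] at key
    simp only [Complex.sub_re, Complex.sub_im, h0] at key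
    simp only [RCLike.star_def, Complex.mul_re, Complex.conj_re, Complex.conj_im]
    nlinarith
  · by_cases hp0 : p1 = 0
    · simp [hp0]
    have h1 : (qpoly N y).degree ≤ q.natDegree := by
      apply qpoly_degree_le
      intro i j
      rw [← degree_eq_natDegree hq]
      exact deg_le_of (hnd i j) (RatFunc.denom_ne_zero _) hq (hG.1 i j)
    have h2 : (C c * toC q).degree ≤ q.natDegree := by
      rw [degree_mul, toC_degree, degree_eq_natDegree hq]
      calc (C c).degree + (q.natDegree : WithBot ℕ) ≤ 0 + (q.natDegree : WithBot ℕ) := by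
            gcongr; exact degree_C_le
        _ = _ := zero_add _
    have h3 := (degree_sub_le (C c * toC q) (qpoly N y)).trans (max_le h2 h1)
    rw [hp1, degree_mul, degree_X_sub_C, degree_eq_natDegree hp0] at h3
    rw [toC_degree, degree_eq_natDegree hp0, degree_eq_natDegree hq]
    norm_cast at *
    omega
  · filter_upwards [(Set.finite_singleton (0:ℝ)).eventually_cofinite_notMem] with ω h2
    have h2' : ω ≠ 0 := h2
    change 0 ≤ (eval (jw ω) _ / eval (jw ω) _).re
    have hj : (jw ω).re = 0 := by simp [jw]
    have hj2 : jw ω ≠ 0 := by simp [jw, h2']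
    have hj3 : (jw ω).im = ω := by simp [jw]
    rw [hval _ hj.ge hj2, Complex.div_re, hj, hj3]
    have := axis hax ω h2' (hregs _ hj.ge) y
    rw [re_jw] at this
    simp only [Complex.sub_im, h0]
    rw [← add_div]
    apply div_nonneg _ (Complex.normSq_nonneg _)
    nlinarith

lemma evalM_zero_eq (G : Matrix (Fin n) (Fin n) (RatFunc ℝ)) : evalM G 0 = (evalR G 0).map Complex.ofReal := by
  ext i j
  rw [evalM, of_apply, map_apply, evalR, of_apply, ← Complex.ofReal_zero, evalC_real, RatFunc.eval]
  simp [Polynomial.coeff_zero_eq_eval_zero]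

lemma qf_real_im {A : Matrix (Fin n) (Fin n) ℝ} (hA : ∀ i j, A i j = A j i) (y : Fin n → ℂ) :
    (qf (A.map Complex.ofReal) y).im = 0 := by
  have hH : (A.map Complex.ofReal)ᴴ = A.map Complex.ofReal := by
    ext i j; simp [hA i j]
  have := qf_ct (A.map Complex.ofReal) y
  rw [hH] at this
  have h2 := congrArg Complex.im this
  simp at h2
  linarith

lemma qf_real_re (A : Matrix (Fin n) (Fin n) ℝ) (y : Fin n → ℂ) :
    (qf (A.map Complex.ofReal) y).re =
      (fun i => (y i).re) ⬝ᵥ (A *ᵥ fun i => (y i).re) + (fun i => (y i).im) ⬝ᵥ (A *ᵥ fun i => (y i).im) := by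
  simp only [qf_eq, dotProduct, mulVec, Complex.re_sum, Finset.mul_sum, ← Finset.sum_add_distrib]
  refine Finset.sum_congr rfl fun i _ => Finset.sum_congr rfl fun j _ => ?_
  simp

lemma neg_coercive {A : Matrix (Fin n) (Fin n) ℝ} (hA : (-A).PosDef) :
    ∃ c : ℝ, 0 < c ∧ ∀ y : Fin n → ℂ, (qf (A.map Complex.ofReal) y).re ≤ -(c * nsq y) := by
  have hp : ∀ x : Fin n → ℝ, x ≠ 0 → x ⬝ᵥ (A *ᵥ x) < 0 := by
    intro x hx
    have := (posDef_iff_dotProduct_mulVec.mp hA).2 hx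
    simp only [neg_mulVec, dotProduct_neg, star_trivial] at this
    linarith
  have hp' : ∀ x : Fin n → ℝ, x ⬝ᵥ (A *ᵥ x) ≤ 0 := by
    intro x
    by_cases hx : x = 0
    · simp [hx]
    · exact (hp x hx).le
  obtain ⟨c, hc, h⟩ := coercive (M := -(A.map Complex.ofReal)) (fun y hy => by
    rw [qf_neg, Complex.neg_re, qf_real_re]
    have hor : (fun i => (y i).re) ≠ 0 ∨ (fun i => (y i).im) ≠ 0 := by
      by_contra! hh
      apply hy
      ext i
      exact Complex.ext (congrFun hh.1 i) (congrFun hh.2 i)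
    rcases hor with hh | hh
    · have h1 := hp _ hh
      have h2 := hp' (fun i => (y i).im)
      linarith
    · have h1 := hp _ hh
      have h2 := hp' (fun i => (y i).re)
      linarith)
  refine ⟨c, hc, fun y => ?_⟩
  have := h y
  rw [qf_neg, Complex.neg_re] at this
  linarith

lemma loop_ineq {P C : Matrix (Fin n) (Fin n) ℂ} {s : ℂ} (hP : ∀ u, 0 ≤ (s * qf P u).re)
    {w y : Fin n → ℂ} (hy : y = P *ᵥ (w + C *ᵥ y)) :
    -(s * star (qf C y)).re ≤ (s * (star w ⬝ᵥ y)).re := by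
  have h1 := hP (w + C *ᵥ y)
  have h2 : qf P (w + C *ᵥ y) = star w ⬝ᵥ y + star (qf C y) := by
    rw [qf, ← hy, star_add, add_dotProduct, qf, star_dot]
  rw [h2, mul_add, Complex.add_re] at h1
  linarith

lemma loop_bound {P C : Matrix (Fin n) (Fin n) ℂ} {s : ℂ} (hP : ∀ u, 0 ≤ (s * qf P u).re)
    {δ : ℝ} (hδ : 0 < δ) (hC : ∀ y, δ * nsq y ≤ -(s * star (qf C y)).re)
    {y : Fin n → ℂ} {j : Fin n} (hy : y = P *ᵥ (Pi.single j 1 + C *ᵥ y)) (i : Fin n) :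
    ‖y i‖ ≤ ‖s‖ / δ := by
  have h1 := (hC y).trans (loop_ineq hP hy)
  have h2 : star (Pi.single j (1 : ℂ)) ⬝ᵥ y = y j := by
    rw [← Pi.single_star, star_one, single_one_dotProduct]
  rw [h2] at h1
  refine coord_bound (j := j) hδ (norm_nonneg _) (h1.trans ?_) i
  rw [← norm_mul]
  exact Complex.re_le_norm _

lemma loop_det {P C : Matrix (Fin n) (Fin n) ℂ} {s : ℂ} (hP : ∀ u, 0 ≤ (s * qf P u).re)
    {δ : ℝ} (hδ : 0 < δ) (hC : ∀ y, δ * nsq y ≤ -(s * star (qf C y)).re) : (1 - P * C).det ≠ 0 := by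
  intro h
  obtain ⟨v, hv, h0⟩ := Matrix.exists_mulVec_eq_zero_iff.mpr h
  rw [sub_mulVec, one_mulVec, ← mulVec_mulVec, sub_eq_zero] at h0
  have h1 := (hC v).trans (loop_ineq (w := 0) hP (by rw [zero_add]; exact h0))
  simp at h1
  have := mul_pos hδ (nsq_pos hv)
  linarith

theorem sufficiency {C P : Matrix (Fin n) (Fin n) (RatFunc ℝ)} (hS : IsSNI C) (h0 : (-(evalR C 0)).PosDef)
    (hNI : IsNI P) (hsp : StrictlyProper P) : FeedbackStable P C := by
  obtain ⟨hC, hker⟩ := hS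
  have hCreg : ∀ z : ℂ, 0 ≤ z.re → RegM C z := fun z hz i j => hC.2 z hz i j
  have hPreg : ∀ z : ℂ, 0 < z.re → RegM P z := fun z hz => (regM_iff _ _).mpr (hNI.2.1 z hz)
  obtain ⟨c, hc, hcoer⟩ := neg_coercive h0
  have hsym : ∀ i j, evalR C 0 i j = evalR C 0 j i := by
    intro i j
    have := h0.isHermitian.apply i j
    simp at this
    linarith
  have hC0 : ∀ z : ℂ, 0 < z.re → ∀ y, (z.re * c) * nsq y ≤ -(z * star (qf (evalM C z) y)).re := by
    intro z hz y
    have h1 := SNI_pr hC (fun ω hω _ y => by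
      by_cases hy : y = 0
      · simp [hy, qf]
      · exact ((niKer_pd _).mp (hker ω hω) y hy).le) y (by rw [evalM_zero_eq]; exact qf_real_im hsym y) z hz
    have h2 := hcoer y
    rw [evalM_zero_eq] at h1
    nlinarith
  have hPpr := NI_pr hNI hsp
  have hdet : ∀ z : ℂ, 0 < z.re → (1 - evalM P z * evalM C z).det ≠ 0 := fun z hz =>
    loop_det (hPpr z hz) (mul_pos hz hc) (hC0 z hz)
  have hL : ∀ z : ℂ, 0 < z.re → RegM (1 - P * C) z ∧ evalM (1 - P * C) z = 1 - evalM P z * evalM C z := by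
    intro z hz
    have h1 := regM_mul (hPreg z hz) (hCreg z hz.le)
    have h2 := regM_sub (regM_one (s := z)).1 h1.1
    exact ⟨h2.1, by rw [h2.2, h1.2, regM_one.2]⟩
  have hT : ∀ z : ℂ, 0 < z.re → (1 - P * C).det ≠ 0 ∧ RegM (1 - P * C)⁻¹ z ∧
      evalM (1 - P * C)⁻¹ z = (1 - evalM P z * evalM C z)⁻¹ := by
    intro z hz
    have := regM_inv (hL z hz).1 (by rw [(hL z hz).2]; exact hdet z hz)
    rwa [(hL z hz).2] at this
  have hdet0 : (1 - P * C).det ≠ 0 := (hT 1 (by simp)).1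
  refine ⟨hdet0, ?_⟩
  set Q := (1 - P * C)⁻¹ * P with hQ
  have hTQ : (1 - P * C)⁻¹ = 1 + Q * C := by
    have h1 : (1 - P * C)⁻¹ * (1 - P * C) = 1 := Matrix.nonsing_inv_mul _ (isUnit_iff_ne_zero.mpr hdet0)
    rw [mul_sub, mul_one, ← mul_assoc] at h1
    rw [hQ]; exact sub_eq_iff_eq_add.mp h1
  have hcol : ∀ z : ℂ, 0 < z.re → ∀ j, (fun i => evalC (Q i j) z) =
      evalM P z *ᵥ (Pi.single j 1 + evalM C z *ᵥ (fun i => evalC (Q i j) z)) := by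
    intro z hz j
    have h1 := regM_mul (hT z hz).2.1 (hPreg z hz)
    rw [← hQ, (hT z hz).2.2] at h1
    have h2 : (1 - evalM P z * evalM C z) * evalM Q z = evalM P z := by
      rw [h1.2, ← mul_assoc, Matrix.mul_nonsing_inv _ (isUnit_iff_ne_zero.mpr (hdet z hz)), one_mul]
    have h3 : (fun i => evalC (Q i j) z) = evalM Q z *ᵥ Pi.single j 1 := by
      ext i; simp [evalM]
    rw [h3, mulVec_add, ← h2]
    simp only [mulVec_mulVec, ← add_mulVec]
    rw [h2]
    congr 1
    rw [sub_mul, one_mul, sub_eq_iff_eq_add] at h2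
    rw [← mul_assoc, ← h2]
  have hQb : ∀ z : ℂ, 0 < z.re → ∀ i j, ‖evalC (Q i j) z‖ ≤ ‖z‖ / (z.re * c) := fun z hz i j =>
    loop_bound (hPpr z hz) (mul_pos hz hc) (hC0 z hz) (hcol z hz j) i
  have hQpos : ∀ z : ℂ, 0 < z.re → RegM Q z := fun z hz =>
    (regM_mul (hT z hz).2.1 (hPreg z hz)).1
  have hQjw : ∀ ω : ℝ, 0 < ω → RegM Q (jw ω) := by
    intro ω hω i j
    have hj : (jw ω).re = 0 := by simp [jw]
    have hpd := (niKer_pd _).mp (hker ω hω)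
    set E : ℂ → Matrix (Fin n) (Fin n) ℂ := fun z => (-(star z)) • evalM C z with hE
    have hqE : ∀ z y, (qf (E z) y).re = -(z * star (qf (evalM C z) y)).re := by
      intro z y
      rw [hE, qf_smul]; simp
    obtain ⟨δ, hδ, hco⟩ := coercive (M := E (jw ω)) (fun y hy => by
      rw [hqE, re_jw]
      have := hpd y hy
      simp only [RCLike.star_def, Complex.conj_im]
      nlinarith)
    have hcont : ContinuousAt (fun z => ∑ i, ∑ j, ‖(E z - E (jw ω)) i j‖) (jw ω) := by
      have h1 := evalM_cont (hCreg (jw ω) hj.ge)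
      have h2 : ContinuousAt (fun z => E z - E (jw ω)) (jw ω) := by
        rw [hE]; fun_prop
      have h3 : ∀ i j, ContinuousAt (fun z => (E z - E (jw ω)) i j) (jw ω) := fun i j =>
        continuousAt_pi.mp (continuousAt_pi.mp h2 i) j
      apply tendsto_finsetSum; intro i _
      apply tendsto_finsetSum; intro j _
      exact (h3 i j).norm
    have hsm : ∀ᶠ z in 𝓝 (jw ω), ∑ i, ∑ j, ‖(E z - E (jw ω)) i j‖ < δ / 2 := by
      apply hcont.eventually_lt_const
      simpa using hδ
    have hnb : ∀ᶠ z : ℂ in 𝓝 (jw ω), ‖z‖ < ‖jw ω‖ + 1 :=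
      continuous_norm.continuousAt.eventually_lt_const (by simp)
    refine reg_of_bdd _ _ ((‖jw ω‖ + 1) / (δ / 2)) ?_
    have hpath := (tendsto_path (jw ω)).mono_right nhdsWithin_le_nhds
    filter_upwards [hpath.eventually hsm, hpath.eventually hnb, self_mem_nhdsWithin] with x h1 h2 h3
    have hre : 0 < (jw ω + x).re := by simpa [hj] using h3
    refine (loop_bound (hPpr _ hre) (half_pos hδ) (fun y => ?_) (hcol _ hre j) i).trans ?_
    · rw [← hqE]
      have h4 := hco y
      have h5 := qf_bound (E (jw ω + x) - E (jw ω)) y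
      have h6 := Complex.abs_re_le_norm (qf (E (jw ω + x) - E (jw ω)) y)
      rw [qf_sub, Complex.sub_re] at h6
      rw [qf_sub] at h5
      have h7 := (abs_le.mp (h6.trans h5)).1
      have h8 := mul_le_mul_of_nonneg_right h1.le (nsq_nonneg y)
      linarith
    · gcongr
  have hQzero : RegM Q 0 := by
    intro i j
    refine reg_of_bdd _ _ (1 / c) ?_
    filter_upwards [self_mem_nhdsWithin] with x hx
    have hx' : 0 < x := hx
    have := hQb (0 + x) (by simpa using hx) i j
    refine this.trans (le_of_eq ?_)
    simp only [zero_add, Complex.norm_real, Complex.ofReal_re, Real.norm_eq_abs, abs_of_pos hx']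
    field_simp
  have hQrh : ∀ i j, Q i j ∈ rh := by
    intro i j
    constructor
    · rw [proper_iff]
      refine ⟨1 / c, ?_⟩
      filter_upwards [eventually_gt_atTop 0] with x hx
      have := hQb x (by simpa using hx) i j
      refine this.trans (le_of_eq ?_)
      simp only [Complex.norm_real, Complex.ofReal_re, Real.norm_eq_abs, abs_of_pos hx]
      field_simp
    · intro z hz
      rcases hz.lt_or_eq with h | h
      · exact hQpos z h i j
      · have e : z = jw z.im := by apply Complex.ext <;> simp [jw, ← h]
        rw [e]
        rcases lt_trichotomy z.im 0 with h | h | h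
        · have := (regM_conj Q (jw (-z.im))).mpr (hQjw (-z.im) (by linarith))
          rw [← jw_neg, neg_neg] at this
          exact this i j
        · rw [h]; simpa [jw] using hQzero i j
        · exact hQjw _ h i j
  have hCrh := (memRH_iff C).mp hC
  have hmul : ∀ {A B : Matrix (Fin n) (Fin n) (RatFunc ℝ)}, (∀ i j, A i j ∈ rh) → (∀ i j, B i j ∈ rh) →
      ∀ i j, (A * B) i j ∈ rh := by
    intro A B hA hB i j
    rw [mul_apply]
    exact sum_mem fun k _ => mul_mem (hA i k) (hB k j)
  have hTrh : ∀ i j, (1 - P * C)⁻¹ i j ∈ rh := by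
    rw [hTQ]
    intro i j
    refine add_mem ?_ (hmul hQrh hCrh i j)
    rw [one_apply]; split_ifs
    · exact one_mem _
    · exact zero_mem _
  rw [memRH_iff]
  rintro (i | i) (j | j)
  · exact hTrh i j
  · exact hQrh i j
  · exact hmul hCrh hTrh i j
  · rw [fromBlocks_apply₂₂, mul_assoc]
    exact hmul hCrh hQrh i j

end Part4

section Part5

/-- second order matrix polynomial `m s² I + D s + K` -/
def Phi (m : ℝ) (D K : Matrix (Fin n) (Fin n) ℝ) : Matrix (Fin n) (Fin n) (RatFunc ℝ) :=
  Matrix.of fun i j => algebraMap ℝ[X] (RatFunc ℝ)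
    (Polynomial.C (if i = j then m else 0) * X ^ 2 + Polynomial.C (D i j) * X + Polynomial.C (K i j))

lemma Phi_reg (m : ℝ) (D K : Matrix (Fin n) (Fin n) ℝ) (s : ℂ) : RegM (Phi m D K) s :=
  fun _ _ => poly_reg _ _

lemma Phi_eval (m : ℝ) (D K : Matrix (Fin n) (Fin n) ℝ) (s : ℂ) :
    evalM (Phi m D K) s = ((m : ℂ) * s ^ 2) • (1 : Matrix (Fin n) (Fin n) ℂ) + s • D.map Complex.ofReal
      + K.map Complex.ofReal := by
  ext i j
  rw [evalM, of_apply, Phi, of_apply, evalC_poly]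
  by_cases h : i = j
  · subst h; simp; ring
  · simp [h]; ring

/-- admissible mass / damping / stiffness data -/
structure Adm (m d k : ℝ) (D K : Matrix (Fin n) (Fin n) ℝ) : Prop where
  hm : 0 < m
  hd : 0 ≤ d
  hk : 0 ≤ k
  hdk : 0 < d + k
  hD : ∀ y, (qf (D.map Complex.ofReal) y).re = d * nsq y
  hKi : ∀ y, (qf (K.map Complex.ofReal) y).im = 0
  hKr : ∀ y, k * nsq y ≤ (qf (K.map Complex.ofReal) y).re

variable {m d k : ℝ} {D K : Matrix (Fin n) (Fin n) ℝ}

/-- coercivity constant -/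
def bet (m d k : ℝ) (s : ℂ) : ℝ := s.re * (m * ‖s‖ ^ 2) + ‖s‖ ^ 2 * d + s.re * k

lemma Adm.bet_pos (h : Adm m d k D K) {s : ℂ} (hs : 0 < s.re) : 0 < bet m d k s := by
  have h1 : 0 < ‖s‖ := norm_pos_iff.mpr (by rintro rfl; simp at hs)
  have := h.hm
  have := h.hd
  have := h.hk
  unfold bet
  positivity

lemma Adm.coer (h : Adm m d k D K) {s : ℂ} (hs : 0 ≤ s.re) (y : Fin n → ℂ) :
    bet m d k s * nsq y ≤ (star s * qf (evalM (Phi m D K) s) y).re := by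
  have e : ‖s‖ ^ 2 = s.re * s.re + s.im * s.im := by
    rw [← Complex.normSq_eq_norm_sq, Complex.normSq_apply]
  rw [Phi_eval, qf_add, qf_add, qf_smul, qf_smul, qf_one, bet, e]
  have h1 := h.hD y
  have h2 := h.hKi y
  have h3 := h.hKr y
  generalize qf (D.map Complex.ofReal) y = a at *
  generalize qf (K.map Complex.ofReal) y = b at *
  have h4 := mul_le_mul_of_nonneg_left h3 hs
  simp only [RCLike.star_def, pow_two, Complex.mul_re, Complex.mul_im, Complex.add_re, Complex.add_im, Complex.conj_re,
    Complex.conj_im, Complex.ofReal_re, Complex.ofReal_im, h1, h2]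
  nlinarith

lemma Adm.det (h : Adm m d k D K) {s : ℂ} (hs : 0 < s.re) : (evalM (Phi m D K) s).det ≠ 0 := by
  intro h0
  obtain ⟨y, hy, hy0⟩ := Matrix.exists_mulVec_eq_zero_iff.mpr h0
  have h1 := h.coer hs.le y
  rw [qf, hy0] at h1
  simp at h1
  have := mul_pos (h.bet_pos hs) (nsq_pos hy)
  linarith

lemma Adm.inv (h : Adm m d k D K) {s : ℂ} (hs : 0 < s.re) :
    (Phi m D K).det ≠ 0 ∧ RegM (Phi m D K)⁻¹ s ∧ evalM (Phi m D K)⁻¹ s = (evalM (Phi m D K) s)⁻¹ :=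
  regM_inv (Phi_reg _ _ _ _) (h.det hs)

lemma Adm.solve (h : Adm m d k D K) {s : ℂ} (hs : 0 < s.re) (u : Fin n → ℂ) :
    bet m d k s * nsq (evalM (Phi m D K)⁻¹ s *ᵥ u) ≤ (s * (star u ⬝ᵥ (evalM (Phi m D K)⁻¹ s *ᵥ u))).re := by
  have h1 := h.coer hs.le (evalM (Phi m D K)⁻¹ s *ᵥ u)
  rw [qf] at h1
  have h2 : evalM (Phi m D K) s *ᵥ (evalM (Phi m D K)⁻¹ s *ᵥ u) = u := by
    rw [(h.inv hs).2.2, mulVec_mulVec, Matrix.mul_nonsing_inv _ (isUnit_iff_ne_zero.mpr (h.det hs)), one_mulVec]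
  rw [h2, ← star_dot, ← star_mul', RCLike.star_def, Complex.conj_re] at h1
  exact h1

lemma Adm.pr (h : Adm m d k D K) {s : ℂ} (hs : 0 < s.re) (u : Fin n → ℂ) :
    0 ≤ (s * qf (evalM (Phi m D K)⁻¹ s) u).re :=
  le_trans (mul_nonneg (h.bet_pos hs).le (nsq_nonneg _)) (h.solve hs u)

lemma Adm.bound (h : Adm m d k D K) {s : ℂ} (hs : 0 < s.re) (i j : Fin n) :
    ‖evalC ((Phi m D K)⁻¹ i j) s‖ ≤ ‖s‖ / bet m d k s := by
  have h1 := h.solve hs (Pi.single j 1)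
  have h3 : evalM (Phi m D K)⁻¹ s *ᵥ Pi.single j 1 = fun i => evalC ((Phi m D K)⁻¹ i j) s := by
    ext i; simp [evalM]
  have h4 : star (Pi.single j (1 : ℂ) : Fin n → ℂ) = Pi.single j 1 := by
    rw [← Pi.single_star, star_one]
  rw [h3, h4, single_dotProduct, one_mul] at h1
  refine coord_bound (h.bet_pos hs) (j := j) (norm_nonneg s) (h1.trans ?_) i
  rw [← norm_mul]
  exact Complex.re_le_norm _

lemma Adm.strict (h : Adm m d k D K) : StrictlyProper (Phi m D K)⁻¹ := by
  intro i j
  have := deg_of_bdd ((Phi m D K)⁻¹ i j) 1 (1 / m) ?_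
  · by_cases h0 : ((Phi m D K)⁻¹ i j).num = 0
    · rw [h0, degree_zero]
      exact bot_lt_iff_ne_bot.mpr (by rw [ne_eq, degree_eq_bot]; exact RatFunc.denom_ne_zero _)
    · refine lt_of_lt_of_le ?_ this
      rw [pow_one, degree_mul, degree_X, degree_eq_natDegree h0]
      norm_cast
      omega
  · filter_upwards [eventually_ge_atTop 1] with x hx1
    have hx : 0 < x := by linarith
    have h1 := h.bound (s := x) (by simpa using hx) i j
    rw [pow_one, norm_mul]
    have hb := h.bet_pos (s := x) (by simpa using hx)
    rw [le_div_iff₀ hb] at h1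
    rw [bet, Complex.norm_real, Real.norm_eq_abs, abs_of_pos hx, Complex.ofReal_re] at h1
    rw [Complex.norm_real, Real.norm_eq_abs, abs_of_pos hx, le_div_iff₀ h.hm]
    have h2 := norm_nonneg (evalC ((Phi m D K)⁻¹ i j) x)
    generalize ‖evalC ((Phi m D K)⁻¹ i j) x‖ = z at *
    have := mul_nonneg h2 (mul_nonneg (sq_nonneg x) h.hd)
    have := mul_nonneg h2 (mul_nonneg hx.le h.hk)
    have h5 : x * (x * z * m * x) ≤ x * 1 := by nlinarith
    have h5 := le_of_mul_le_mul_left h5 hx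
    have h7 : 0 ≤ x * z * m := by have := h.hm; positivity
    nlinarith

lemma Adm.bd0 (h : Adm m d k D K) (i j : Fin n) :
    ∀ᶠ x : ℝ in 𝓝[>] 0, ‖(x : ℂ) * evalC ((Phi m D K)⁻¹ i j) (0 + x)‖ ≤ 1 / (d + k) := by
  filter_upwards [Ioo_mem_nhdsGT (zero_lt_one' ℝ)] with x hx'
  obtain ⟨hx, hx1⟩ := hx'
  have h1 := h.bound (s := x) (by simpa using hx) i j
  rw [zero_add, norm_mul]
  have hb := h.bet_pos (s := x) (by simpa using hx)
  rw [le_div_iff₀ hb] at h1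
  rw [bet, Complex.norm_real, Real.norm_eq_abs, abs_of_pos hx, Complex.ofReal_re] at h1
  rw [Complex.norm_real, Real.norm_eq_abs, abs_of_pos hx, le_div_iff₀ h.hdk]
  have h2 := norm_nonneg (evalC ((Phi m D K)⁻¹ i j) x)
  generalize ‖evalC ((Phi m D K)⁻¹ i j) x‖ = z at *
  have g1 : 0 ≤ z * (x * (m * x ^ 2)) := by have := h.hm; positivity
  have g2 : 0 ≤ z * x * (k * (1 - x)) := by
    have := h.hk
    have : 0 ≤ 1 - x := by linarith
    positivity
  have : x * (x * z * (d + k)) ≤ x * 1 := by nlinarith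
  exact le_of_mul_le_mul_left this hx

lemma Adm.bdw (h : Adm m d k D K) {ω : ℝ} (hω : 0 < ω) (i j : Fin n) :
    ∀ᶠ x : ℝ in 𝓝[>] 0, ‖(x : ℂ) * evalC ((Phi m D K)⁻¹ i j) (jw ω + x)‖ ≤ 1 / (m * ω) := by
  filter_upwards [self_mem_nhdsWithin] with x hx
  have hx : 0 < x := hx
  have hre : (jw ω + x).re = x := by simp [jw]
  have hpos : 0 < (jw ω + x).re := by rw [hre]; exact hx
  have him : ω ≤ ‖jw ω + x‖ := by
    have := Complex.abs_im_le_norm (jw ω + x)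
    have e : (jw ω + x).im = ω := by simp [jw]
    rw [e, abs_of_pos hω] at this
    exact this
  have h1 := h.bound hpos i j
  rw [norm_mul, Complex.norm_real, Real.norm_eq_abs, abs_of_pos hx]
  have hb := h.bet_pos hpos
  rw [le_div_iff₀ hb, bet, hre] at h1
  have hm := h.hm
  rw [le_div_iff₀ (by positivity)]
  have h2 := norm_nonneg (evalC ((Phi m D K)⁻¹ i j) (jw ω + x))
  generalize ‖evalC ((Phi m D K)⁻¹ i j) (jw ω + x)‖ = z at *
  generalize ‖jw ω + x‖ = r at *
  have hr : 0 < r := by linarith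
  have hd := h.hd
  have hk := h.hk
  have g1 : 0 ≤ z * (r ^ 2 * d) := by positivity
  have g2 : 0 ≤ z * (x * k) := by positivity
  have g3 : 0 ≤ r * (x * z * m) * (r - ω) := mul_nonneg (by positivity) (by linarith)
  have : r * (x * z * (m * ω)) ≤ r * 1 := by nlinarith
  exact le_of_mul_le_mul_left this hr

lemma Adm.nodouble (h : Adm m d k D K) : NoDoubleOriginPole (Phi m D K)⁻¹ := by
  intro i j
  have := mult_le _ 0 1 _ (by simpa using h.bd0 i j)
  rw [show (0 : ℂ) = algebraMap ℝ ℂ 0 by simp, ← Polynomial.eq_rootMultiplicity_map (algebraMap ℝ ℂ).injective] at this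
  exact this

lemma nonneg_of_lin {c : ℂ} (h : ∀ t : ℝ, 0 ≤ c.re + t * c.im) : 0 ≤ c := by
  have him : c.im = 0 := by
    by_contra h0
    have := h (-(c.re + 1) / c.im)
    rw [div_mul_cancel₀ _ h0] at this
    linarith
  rw [Complex.nonneg_iff]
  exact ⟨by have := h 0; linarith, him.symm⟩

lemma tendsto_ray (s0 w : ℂ) (hw : w ≠ 0) : Tendsto (fun x : ℝ => s0 + (x : ℂ) * w) (𝓝[>] 0) (𝓝[≠] s0) := by
  apply tendsto_nhdsWithin_of_tendsto_nhds_of_eventually_within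
  · apply Tendsto.mono_left _ nhdsWithin_le_nhds
    apply Continuous.tendsto' (by fun_prop); simp
  · filter_upwards [self_mem_nhdsWithin] with x hx
    simpa using ⟨ne_of_gt hx, hw⟩

lemma Adm.ni (h : Adm m d k D K) : IsNI (Phi m D K)⁻¹ := by
  refine ⟨fun i j => (h.strict i j).le, fun s hs => (regM_iff _ _).mp (h.inv hs).2.1, ?_, ?_, ?_⟩
  · intro ω hω hp
    rw [← regM_iff] at hp
    rw [niKer_psd]
    intro y
    have hc : Tendsto (fun x : ℝ => ((jw ω + x) * qf (evalM (Phi m D K)⁻¹ (jw ω + x)) y).re) (𝓝[>] 0)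
        (𝓝 (jw ω * qf (evalM (Phi m D K)⁻¹ (jw ω)) y).re) := by
      have h1 : Tendsto (fun s => (s * qf (evalM (Phi m D K)⁻¹ s) y).re) (𝓝 (jw ω))
          (𝓝 (jw ω * qf (evalM (Phi m D K)⁻¹ (jw ω)) y).re) := by
        have h2 : ContinuousAt (fun s => qf (evalM (Phi m D K)⁻¹ s) y) (jw ω) :=
          (qf_cont_M y).continuousAt.comp (evalM_cont hp)
        exact (Complex.continuous_re.continuousAt.comp (continuousAt_id.mul h2)).tendsto
      exact (h1.mono_left nhdsWithin_le_nhds).comp (tendsto_path (jw ω))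
    have h3 := ge_of_tendsto hc (b := 0) (by
      filter_upwards [self_mem_nhdsWithin] with x hx
      exact h.pr (by simpa [jw] using hx) y)
    rw [re_jw] at h3
    nlinarith
  · intro ω hω _
    choose L hL using fun i j => lim_of_bdd ((Phi m D K)⁻¹ i j) (jw ω) _ (h.bdw hω i j)
    have hT : Tendsto (fun s : ℂ => (s - jw ω) • Complex.I • evalM (Phi m D K)⁻¹ s) (𝓝[≠] jw ω)
        (𝓝 (Complex.I • Matrix.of L)) := by
      refine tendsto_pi_nhds.mpr fun i => tendsto_pi_nhds.mpr fun j => ?_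
      have := (hL i j).const_mul Complex.I
      refine this.congr fun s => ?_
      simp [evalM]; ring
    refine ⟨Complex.I • Matrix.of L, herm_of_qf fun y => ?_, hT⟩
    apply nonneg_of_lin
    intro t
    set w : ℂ := 1 + t * Complex.I with hw
    have hwre : w.re = 1 := by simp [hw]
    have hwim : w.im = t := by simp [hw]
    have hw0 : w ≠ 0 := by intro h0; rw [h0] at hwre; simp at hwre
    have h1 := (((qf_cont_M y).tendsto _).comp hT).comp (tendsto_ray (jw ω) w hw0)
    have h2 : Tendsto (fun x : ℝ => jw ω + (x : ℂ) * w) (𝓝[>] 0) (𝓝 (jw ω)) :=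
      (tendsto_ray (jw ω) w hw0).mono_right nhdsWithin_le_nhds
    have h3 := (Complex.continuous_re.tendsto _).comp ((h2.mul h1).mul_const (star w * (-Complex.I)))
    have h4 := ge_of_tendsto h3 (b := 0) (by
      filter_upwards [self_mem_nhdsWithin] with x hx
      have hx : 0 < x := hx
      have h5 := h.pr (s := jw ω + x * w) (by simpa [jw, hwre] using hx) y
      simp only [Function.comp_apply, add_sub_cancel_left, qf_smul]
      generalize qf (evalM (Phi m D K)⁻¹ (jw ω + x * w)) y = g at *
      have e : (jw ω + x * w) * (x * w * (Complex.I * g)) * (star w * -Complex.I)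
          = ((x * ‖w‖ ^ 2 : ℝ) : ℂ) * ((jw ω + x * w) * g) := by
        have e1 : w * star w = ((‖w‖ ^ 2 : ℝ) : ℂ) := by
          rw [RCLike.star_def, Complex.mul_conj']; push_cast; rfl
        rw [Complex.ofReal_mul, ← e1]
        linear_combination (-(jw ω + x * w) * x * w * g * star w) * Complex.I_mul_I
      rw [e, Complex.re_ofReal_mul]
      positivity)
    generalize qf (Complex.I • Matrix.of L) y = c at *
    have e : (jw ω * c * (star w * -Complex.I)).re = ω * (c.re + t * c.im) := by
      simp [jw, hwre, hwim]
      ring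
    rw [e] at h4
    exact nonneg_of_mul_nonneg_right h4 hω
  · intro _
    have hk : ∀ k : ℕ, 2 ≤ k → Tendsto (fun s : ℂ => s ^ k • evalM (Phi m D K)⁻¹ s) (𝓝[≠] 0) (𝓝 0) := by
      intro p hp
      refine tendsto_pi_nhds.mpr fun i => tendsto_pi_nhds.mpr fun j => ?_
      obtain ⟨L, hL⟩ := lim_of_bdd ((Phi m D K)⁻¹ i j) 0 _ (h.bd0 i j)
      obtain ⟨q, rfl⟩ := Nat.exists_eq_add_of_le hp
      have h1 : Tendsto (fun s : ℂ => s ^ (q + 1)) (𝓝[≠] 0) (𝓝 0) := by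
        apply Tendsto.mono_left _ nhdsWithin_le_nhds
        apply Continuous.tendsto' (by fun_prop); simp
      have h2 := h1.mul hL
      rw [zero_mul] at h2
      refine h2.congr fun s => ?_
      simp [evalM]; ring
    exact ⟨fun p hp => hk p (by omega), 0, Matrix.PosSemidef.zero, hk 2 le_rfl⟩

lemma Adm.unstable (h : Adm m d k D K) {C : Matrix (Fin n) (Fin n) (RatFunc ℝ)} (hC : MemRHinf C)
    (hst : FeedbackStable (Phi m D K)⁻¹ C) {s : ℂ} (hs : 0 ≤ s.re) {y : Fin n → ℂ}
    (hy : evalM (Phi m D K) s *ᵥ y = evalM C s *ᵥ y) : y = 0 := by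
  obtain ⟨hdet, -, hreg⟩ := hst
  have hQ : RegM ((1 - (Phi m D K)⁻¹ * C)⁻¹ * (Phi m D K)⁻¹) s := fun i j =>
    hreg s hs (Sum.inl i) (Sum.inr j)
  have hCr : RegM C s := fun i j => hC.2 s hs i j
  have hS := regM_sub (Phi_reg m D K s) hCr
  have hM := regM_mul hQ hS.1
  have h1 : (1 - (Phi m D K)⁻¹ * C)⁻¹ * (Phi m D K)⁻¹ * (Phi m D K - C) = 1 := by
    rw [mul_assoc, mul_sub, Matrix.nonsing_inv_mul _ (isUnit_iff_ne_zero.mpr (h.inv (s := 1) (by simp)).1),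
      Matrix.nonsing_inv_mul _ (isUnit_iff_ne_zero.mpr hdet)]
  rw [h1, regM_one.2, hS.2] at hM
  rw [← one_mulVec y, hM.2, ← mulVec_mulVec, sub_mulVec, hy, sub_self, mulVec_zero]

end Part5

section Part6

lemma herm_interp {y v : Fin n → ℂ} (hy : y ≠ 0) (hv : (star y ⬝ᵥ v).im = 0) :
    ∃ H : Matrix (Fin n) (Fin n) ℂ, H.IsHermitian ∧ H *ᵥ y = v := by
  set N : ℝ := nsq y with hN
  have hN0 : (N : ℂ) ≠ 0 := by exact_mod_cast (nsq_pos hy).ne'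
  set a : ℝ := (star y ⬝ᵥ v).re with ha
  have e1 : star y ⬝ᵥ v = (a : ℂ) := by apply Complex.ext <;> simp [ha, hv]
  have e2 : star v ⬝ᵥ y = (a : ℂ) := by rw [← star_dot, e1]; simp
  have e3 : star y ⬝ᵥ y = (N : ℂ) := star_dot_self y
  refine ⟨Matrix.of fun i j => (v i * star (y j) + y i * star (v j)) / N - a * (y i * star (y j)) / N ^ 2, ?_, ?_⟩
  · ext i j
    simp
    ring
  · ext i
    have : ∀ w : Fin n → ℂ, ∑ j, star (w j) * y j = star w ⬝ᵥ y := fun w => rfl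
    calc _ = ∑ j, ((v i / N - a * y i / N ^ 2) * (star (y j) * y j) + y i / N * (star (v j) * y j)) := by
          simp only [mulVec, dotProduct, of_apply]
          refine Finset.sum_congr rfl fun j _ => ?_
          ring
      _ = (v i / N - a * y i / N ^ 2) * N + y i / N * a := by
          rw [Finset.sum_add_distrib, ← Finset.mul_sum, ← Finset.mul_sum, this, this, e3, e2]
      _ = v i := by field_simp; ring

lemma qf_skew_re {A : Matrix (Fin n) (Fin n) ℝ} (hA : ∀ i j, A i j = - A j i) (y : Fin n → ℂ) :
    (qf (A.map Complex.ofReal) y).re = 0 := by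
  have hH : (A.map Complex.ofReal)ᴴ = - A.map Complex.ofReal := by
    ext i j; simp [hA i j]
  have := qf_ct (A.map Complex.ofReal) y
  rw [hH, qf_neg] at this
  have h2 := congrArg Complex.re this
  simp at h2
  linarith

lemma destab (C : Matrix (Fin n) (Fin n) ℂ) {ω : ℝ} (hω : 0 < ω) {y : Fin n → ℂ} (hy : y ≠ 0)
    (hb : 0 ≤ (qf C y).im) : ∃ (m d k : ℝ) (D K : Matrix (Fin n) (Fin n) ℝ), Adm m d k D K ∧
      evalM (Phi m D K) (jw ω) *ᵥ y = C *ᵥ y := by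
  have hN := nsq_pos hy
  set d : ℝ := (qf C y).im / (ω * nsq y) with hd
  obtain ⟨H, hH, hHy⟩ := herm_interp (y := y) (v := C *ᵥ y - (jw ω * d) • y) hy (by
    rw [dotProduct_sub, dotProduct_smul, star_dot_self]
    change (qf C y - _).im = 0
    have e : (qf C y).im = d * (ω * nsq y) := by rw [hd]; field_simp
    simp [jw, e]
    ring)
  have hre : ∀ i j, (H i j).re = (H j i).re := fun i j => by rw [← hH.apply i j]; simp
  have him : ∀ i j, (H i j).im = -(H j i).im := fun i j => by rw [← hH.apply i j]; simp
  set R : Matrix (Fin n) (Fin n) ℝ := Matrix.of fun i j => (H i j).re with hR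
  set S : Matrix (Fin n) (Fin n) ℝ := Matrix.of fun i j => (H i j).im / ω with hS
  set B : ℝ := ∑ i, ∑ j, ‖(R.map Complex.ofReal) i j‖ with hB
  have hB0 : 0 ≤ B := Finset.sum_nonneg fun i _ => Finset.sum_nonneg fun j _ => norm_nonneg _
  have eD : (d • (1 : Matrix (Fin n) (Fin n) ℝ) + S).map Complex.ofReal = (d : ℂ) • 1 + S.map Complex.ofReal := by
    ext i j; by_cases h : i = j <;> simp [h, one_apply]
  have eK : ((B + 1) • (1 : Matrix (Fin n) (Fin n) ℝ) + R).map Complex.ofReal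
      = ((B + 1 : ℝ) : ℂ) • 1 + R.map Complex.ofReal := by
    ext i j; by_cases h : i = j <;> simp [h, one_apply]
  refine ⟨(B + 1) / ω ^ 2, d, 1, d • 1 + S, (B + 1) • 1 + R, ⟨by positivity, by positivity, zero_le_one,
    by positivity, ?_, ?_, ?_⟩, ?_⟩
  · intro z
    rw [eD, qf_add, qf_smul, qf_one, Complex.add_re, qf_skew_re (A := S)]
    · simp
    · intro i j; simp only [hS, of_apply]; rw [him i j, neg_div]
  · intro z
    rw [eK, qf_add, qf_smul, qf_one, Complex.add_im, qf_real_im (A := R)]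
    · simp
    · intro i j; simp only [hR, of_apply]; exact hre i j
  · intro z
    rw [eK, qf_add, qf_smul, qf_one, Complex.add_re]
    have h1 := qf_bound (R.map Complex.ofReal) z
    have h2 := neg_le_of_abs_le ((Complex.abs_re_le_norm _).trans h1)
    rw [← hB] at h2
    simp only [Complex.re_ofReal_mul, Complex.ofReal_re]
    linarith
  · have e : evalM (Phi ((B + 1) / ω ^ 2) (d • 1 + S) ((B + 1) • 1 + R)) (jw ω) = H + (jw ω * d) • 1 := by
      rw [Phi_eval, eD, eK]
      have e1 : (((B + 1) / ω ^ 2 : ℝ) : ℂ) * jw ω ^ 2 = -((B + 1 : ℝ) : ℂ) := by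
        have : (ω : ℂ) ≠ 0 := by exact_mod_cast hω.ne'
        rw [jw, mul_pow, Complex.I_sq]
        push_cast
        field_simp
      have e2 : jw ω • S.map Complex.ofReal + R.map Complex.ofReal = H := by
        ext i j
        have : (ω : ℂ) ≠ 0 := by exact_mod_cast hω.ne'
        simp only [Matrix.add_apply, Matrix.smul_apply, map_apply, hS, hR, of_apply, smul_eq_mul, jw]
        push_cast
        conv_rhs => rw [← Complex.re_add_im (H i j)]
        field_simp
        ring
      rw [e1, ← e2, smul_add, smul_smul, neg_smul]
      abel
    rw [e, add_mulVec, hHy, smul_mulVec, one_mulVec]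
    abel

lemma necessity {C : Matrix (Fin n) (Fin n) (RatFunc ℝ)} (hC : MemRHinf C)
    (hst : ∀ P : Matrix (Fin n) (Fin n) (RatFunc ℝ), IsNI P → StrictlyProper P → NoDoubleOriginPole P →
        FeedbackStable P C) : IsSNI C ∧ (-(evalR C 0)).PosDef := by
  have hker : ∀ ω : ℝ, 0 < ω → ∀ y, y ≠ 0 → (qf (evalM C (jw ω)) y).im < 0 := by
    intro ω hω y hy
    by_contra! hb
    obtain ⟨m, d, k, D, K, h, hΦ⟩ := destab (evalM C (jw ω)) hω hy hb
    exact hy (h.unstable hC (hst _ h.ni h.strict h.nodouble) (by simp [jw]) hΦ)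
  refine ⟨⟨hC, fun ω hω => (niKer_pd _).mpr (hker ω hω)⟩, ?_⟩
  have hreg : RegM C 0 := fun i j => hC.2 0 (by simp) i j
  have hpsd : (niKer (evalM C 0)).PosSemidef := by
    rw [niKer_psd]
    intro y
    have hj : Tendsto jw (𝓝[>] 0) (𝓝 0) := by
      apply Tendsto.mono_left _ nhdsWithin_le_nhds
      apply Continuous.tendsto' (by unfold jw; fun_prop); simp [jw]
    have h1 := ((evalM_cont hreg).tendsto).comp hj
    have h2 := (Complex.continuous_im.tendsto _).comp (((qf_cont_M y).tendsto _).comp h1)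
    refine le_of_tendsto h2 ?_
    filter_upwards [self_mem_nhdsWithin] with ω hω
    by_cases hy : y = 0
    · simp [hy, qf]
    · exact (hker ω hω y hy).le
  have hz : niKer (evalM C 0) = 0 := by
    rw [← hpsd.trace_eq_zero_iff]
    simp only [trace, diag_apply]
    refine Finset.sum_eq_zero fun i _ => ?_
    simp [niKer, evalM_zero_eq]
  have hsym : (evalR C 0).IsHermitian := by
    ext i j
    have := congrFun (congrFun hz i) j
    simp [niKer, evalM_zero_eq, sub_eq_zero] at this
    simpa using this.symm
  have hA := hsym.neg
  rw [hA.posDef_iff_eigenvalues_pos]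
  by_contra! hne
  obtain ⟨i, hi⟩ := hne
  set l : ℝ := - hA.eigenvalues i with hl
  have hv := hA.mulVec_eigenvectorBasis i
  set v : Fin n → ℝ := (hA.eigenvectorBasis i).ofLp with hvdef
  have hv0 : v ≠ 0 := by
    intro h0
    apply (hA.eigenvectorBasis.orthonormal.ne_zero i)
    ext j; exact congrFun h0 j
  have hCv : evalR C 0 *ᵥ v = l • v := by
    rw [neg_mulVec, neg_eq_iff_eq_neg] at hv
    rw [hv, hl, neg_smul]
  have hl0 : 0 ≤ l := by rw [hl]; linarith
  have e1 : (1 : Matrix (Fin n) (Fin n) ℝ).map Complex.ofReal = 1 := by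
    ext a b; by_cases h : a = b <;> simp [h, one_apply]
  have eK : (l • (1 : Matrix (Fin n) (Fin n) ℝ)).map Complex.ofReal = (l : ℂ) • 1 := by
    ext a b; by_cases h : a = b <;> simp [h, one_apply]
  have h : Adm 1 1 l (1 : Matrix (Fin n) (Fin n) ℝ) (l • 1) := by
    refine ⟨one_pos, zero_le_one, hl0, by positivity, ?_, ?_, ?_⟩
    · intro y; rw [e1, qf_one]; simp
    · intro y; rw [eK, qf_smul, qf_one]; simp
    · intro y; rw [eK, qf_smul, qf_one]; simp
  have hy := h.unstable hC (hst _ h.ni h.strict h.nodouble) (s := 0) (by simp)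
    (y := fun j => ((v j : ℝ) : ℂ)) (by
      rw [Phi_eval, eK, evalM_zero_eq]
      have h2 : (evalR C 0).map Complex.ofReal *ᵥ (fun j => ((v j : ℝ) : ℂ)) = fun j => (((evalR C 0 *ᵥ v) j : ℝ) : ℂ) := by
        ext j; simp [mulVec, dotProduct]
      rw [h2, hCv]
      ext j
      simp [smul_mulVec])
  apply hv0
  ext j
  have := congrFun hy j
  simpa using this

end Part6

/-- converse NI theorem for strictly proper NI uncertainty. -/
theorem converse_strictly_proper_NI {n : ℕ} (C : Matrix (Fin n) (Fin n) (RatFunc ℝ)) (hC : MemRHinf C) :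
    ((∀ P : Matrix (Fin n) (Fin n) (RatFunc ℝ), IsNI P → StrictlyProper P → FeedbackStable P C) ↔
     (∀ P : Matrix (Fin n) (Fin n) (RatFunc ℝ), IsNI P → StrictlyProper P → NoDoubleOriginPole P →
        FeedbackStable P C)) ∧
    ((∀ P : Matrix (Fin n) (Fin n) (RatFunc ℝ), IsNI P → StrictlyProper P → FeedbackStable P C) ↔
     (IsSNI C ∧ (-(evalR C 0)).PosDef)) := by
  have h1 : (∀ P : Matrix (Fin n) (Fin n) (RatFunc ℝ), IsNI P → StrictlyProper P → FeedbackStable P C) →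
      (∀ P : Matrix (Fin n) (Fin n) (RatFunc ℝ), IsNI P → StrictlyProper P → NoDoubleOriginPole P →
        FeedbackStable P C) := fun h P hP hS _ => h P hP hS
  have h2 := necessity hC
  have h3 : (IsSNI C ∧ (-(evalR C 0)).PosDef) →
      ∀ P : Matrix (Fin n) (Fin n) (RatFunc ℝ), IsNI P → StrictlyProper P → FeedbackStable P C :=
    fun h P hP hS => sufficiency h.1 h.2 hP hS
  exact ⟨⟨h1, fun h => h3 (h2 h)⟩, ⟨fun h => h2 (h1 h), h3⟩⟩

end NIControl
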